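/- arXiv:2305.04428 — 4 statements merged into one kernel-verified Lean document; each statement's English description precedes it below -/
import Mathlib

section
/- Real Grothendieck inequality with Krivine's constant: for all m, n, d ∈ ℕ, every real m×n matrix A, and all vectors u_1, …, u_m, v_1, …, v_n in the Euclidean space ℝ^d with ‖u_i‖ = 1 and ‖v_j‖ = 1 for all i, j, one has |∑_{i=1}^m ∑_{j=1}^n A i j · ⟨u_i, v_j⟩| ≤ (π / (2 · log(1 + √2))) · ‖A‖_{∞,1}; in particular the real Grothendieck constant is at most π/(2 log(1+√2)) ≈ 1.782. -/
open scoped BigOperators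

/-- The `ℓ∞ → ℓ₁` operator norm of a real `m × n` matrix:
`sup { |∑ i j, A i j * p i * q j| : |p i| ≤ 1, |q j| ≤ 1 }`. -/
noncomputable def normInftyOne {m n : ℕ} (A : Matrix (Fin m) (Fin n) ℝ) : ℝ :=
  sSup { x : ℝ | ∃ p : Fin m → ℝ, ∃ q : Fin n → ℝ,
    (∀ i, |p i| ≤ 1) ∧ (∀ j, |q j| ≤ 1) ∧ x = |∑ i, ∑ j, A i j * p i * q j| }

/-!
Krivine's trick. Expanding the sine in a power series, and using that entrywise powers of a positive
semidefinite matrix are positive semidefinite, one replaces the given vectors by unit vectors `u'`,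
`v'` with `⟪u' i, v' j⟫ = sin (c * ⟪u i, v j⟫)`; the signs of the coefficients can be absorbed
into the off-diagonal blocks of the Gram matrix, and the diagonal condition is `sinh c ≤ 1`.
For a standard Gaussian vector `x`, Grothendieck's identity
`𝔼 [sign ⟪a, x⟫ * sign ⟪b, x⟫] = 2 / π * arcsin ⟪a, b⟫` then undoes the sine, so rounding
`u' i` and `v' j` to `sign ⟪u' i, x⟫` and `sign ⟪v' j, x⟫` reproduces `⟪u i, v j⟫` on average
up to the factor `π / (2 * c)`. The largest admissible `c` is `arsinh 1 = log (1 + √2)`.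
-/

section PositiveSemidefinite

open Matrix
open scoped ComplexOrder MatrixOrder

variable {𝕜 ι κ : Type*} [RCLike 𝕜]

theorem posSemidef_map_pow [Finite ι] {M : Matrix ι ι 𝕜} (hM : M.PosSemidef) (k : ℕ) :
    (M.map (· ^ k)).PosSemidef := by
  have := Fintype.ofFinite ι
  induction k with
  | zero =>
    convert posSemidef_vecMulVec_self_star (1 : ι → 𝕜) using 1
    ext x y
    simp [vecMulVec_apply]
  | succ k ih =>
    convert ih.hadamard hM using 1
    ext x y
    simp [pow_succ]

theorem posSemidef_of_hasSum [Finite ι] {f : κ → Matrix ι ι 𝕜} {M : Matrix ι ι 𝕜}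
    (hf : ∀ k, (f k).PosSemidef) (hM : HasSum f M) : M.PosSemidef := by
  have := Fintype.ofFinite ι
  refine .of_dotProduct_mulVec_nonneg ?_ fun x => ?_
  · have hM' := hM.matrix_conjTranspose
    simp only [(hf _).isHermitian.eq] at hM'
    exact hM'.unique hM
  · let quadraticForm : Matrix ι ι 𝕜 →+ 𝕜 :=
      { toFun := fun N => star x ⬝ᵥ (N *ᵥ x)
        map_zero' := by simp
        map_add' := fun N N' => by rw [add_mulVec, dotProduct_add] }
    have hcont : Continuous quadraticForm :=
      continuous_const.dotProduct (continuous_id.matrix_mulVec continuous_const)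
    exact (hM.map quadraticForm hcont).nonneg fun k => (hf k).dotProduct_mulVec_nonneg x

theorem posSemidef_fromBlocks_neg [Finite ι] [Finite κ] {A : Matrix ι ι 𝕜} {B : Matrix ι κ 𝕜}
    {C : Matrix κ ι 𝕜} {D : Matrix κ κ 𝕜} (h : (fromBlocks A B C D).PosSemidef) :
    (fromBlocks A (-B) (-C) D).PosSemidef := by
  classical
  have := Fintype.ofFinite ι
  have := Fintype.ofFinite κ
  simpa [fromBlocks_multiply, fromBlocks_conjTranspose] using
    h.mul_mul_conjTranspose_same (fromBlocks 1 0 0 (-1) : Matrix (ι ⊕ κ) (ι ⊕ κ) 𝕜)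

theorem posSemidef_fromBlocks_map_of_hasSum {τ : Type*} [Finite ι] [Finite κ] {A : Matrix ι ι ℝ}
    {B : Matrix ι κ ℝ} {C : Matrix κ ι ℝ} {D : Matrix κ κ ℝ} {f g : ℝ → ℝ} {a : τ → ℝ} {e : τ → ℕ}
    (h : (fromBlocks A B C D).PosSemidef)
    (hf : ∀ x, HasSum (fun k => |a k| * x ^ e k) (f x))
    (hg : ∀ x, HasSum (fun k => a k * x ^ e k) (g x)) :
    (fromBlocks (A.map f) (B.map g) (C.map g) (D.map f)).PosSemidef := by
  let summand (k : τ) : Matrix (ι ⊕ κ) (ι ⊕ κ) ℝ :=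
    fromBlocks (|a k| • A.map (· ^ e k)) (a k • B.map (· ^ e k))
      (a k • C.map (· ^ e k)) (|a k| • D.map (· ^ e k))
  have hsummand (k : τ) : (summand k).PosSemidef := by
    have hpow := (posSemidef_map_pow h (e k)).smul (abs_nonneg (a k))
    rw [fromBlocks_map, fromBlocks_smul] at hpow
    rcases abs_choice (a k) with ha | ha
    · simpa only [summand, ha] using hpow
    · simpa only [summand, ha, neg_smul, neg_neg] using posSemidef_fromBlocks_neg hpow
  refine posSemidef_of_hasSum hsummand (Pi.hasSum.2 fun x => Pi.hasSum.2 fun y => ?_)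
  rcases x with i | i <;> rcases y with j | j
  exacts [hf _, hg _, hg _, hf _]

theorem posSemidef_fromBlocks_sinh_sin [Finite ι] [Finite κ] {A : Matrix ι ι ℝ}
    {B : Matrix ι κ ℝ} {C : Matrix κ ι ℝ} {D : Matrix κ κ ℝ}
    (h : (fromBlocks A B C D).PosSemidef) :
    (fromBlocks (A.map Real.sinh) (B.map Real.sin) (C.map Real.sin)
      (D.map Real.sinh)).PosSemidef := by
  refine posSemidef_fromBlocks_map_of_hasSum (e := fun k : ℕ => 2 * k + 1)
    (a := fun k => (-1) ^ k / (2 * k + 1).factorial) h (fun x => ?_) fun x => ?_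
  · simpa [abs_div, inv_mul_eq_div] using Real.hasSum_sinh x
  · simpa only [div_mul_eq_mul_div] using Real.hasSum_sin x

theorem exists_gram_eq_of_posSemidef [Fintype ι] {M : Matrix ι ι 𝕜} (hM : M.PosSemidef) :
    ∃ w : ι → EuclideanSpace 𝕜 ι, gram 𝕜 w = M := by
  classical
  obtain ⟨B, rfl⟩ := CStarAlgebra.nonneg_iff_eq_star_mul_self.mp hM.nonneg
  refine ⟨fun x => WithLp.toLp 2 (B.col x), ?_⟩
  rw [gram_eq_conjTranspose_mul (EuclideanSpace.basisFun ι 𝕜)]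
  rfl

theorem exists_unit_vectors_inner_eq [Fintype ι] {M : Matrix ι ι ℝ}
    (hM : M.PosSemidef) (hdiag : ∀ x, M x x ≤ 1) :
    ∃ w : ι → EuclideanSpace ℝ ι, (∀ x, ‖w x‖ = 1) ∧
      Pairwise fun x y => inner ℝ (w x) (w y) = M x y := by
  classical
  have hcompleted : (M + diagonal fun x => 1 - M x x).PosSemidef :=
    hM.add (.diagonal fun x => sub_nonneg.2 (hdiag x))
  obtain ⟨w, hw⟩ := exists_gram_eq_of_posSemidef hcompleted
  have hinner (x y : ι) : inner ℝ (w x) (w y) = (M + diagonal fun x => 1 - M x x) x y :=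
    congrFun (congrFun hw x) y
  refine ⟨w, fun x => ?_, fun x y hxy => ?_⟩
  · rw [norm_eq_sqrt_real_inner, hinner]
    simp
  · simp [hinner, diagonal_apply_ne _ hxy]

variable {E : Type*} [SeminormedAddCommGroup E] [InnerProductSpace ℝ E]

theorem exists_unit_vectors_inner_eq_sin [Fintype ι] [Fintype κ] {c : ℝ} (hc : 0 ≤ c)
    (hc' : Real.sinh c ≤ 1) {u : ι → E} {v : κ → E}
    (hu : ∀ i, ‖u i‖ ≤ 1) (hv : ∀ j, ‖v j‖ ≤ 1) :
    ∃ (u' : ι → EuclideanSpace ℝ (ι ⊕ κ)) (v' : κ → EuclideanSpace ℝ (ι ⊕ κ)),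
      (∀ i, ‖u' i‖ = 1) ∧ (∀ j, ‖v' j‖ = 1) ∧
      ∀ i j, inner ℝ (u' i) (v' j) = Real.sin (c * inner ℝ (u i) (v j)) := by
  have hsinh {a : E} (ha : ‖a‖ ≤ 1) : Real.sinh (c * inner ℝ a a) ≤ 1 := by
    refine (Real.sinh_le_sinh.2 (mul_le_of_le_one_right hc ?_)).trans hc'
    rw [real_inner_self_eq_norm_sq]
    exact pow_le_one₀ (norm_nonneg a) ha
  have hgram := (posSemidef_gram ℝ (Sum.elim u v)).smul hc
  rw [← fromBlocks_toBlocks (c • gram ℝ (Sum.elim u v))] at hgram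
  obtain ⟨w, hnorm, hinner⟩ := exists_unit_vectors_inner_eq
    (posSemidef_fromBlocks_sinh_sin hgram) <| by
      rintro (i | j)
      exacts [hsinh (hu i), hsinh (hv j)]
  exact ⟨w ∘ .inl, w ∘ .inr, fun i => hnorm _, fun j => hnorm _, fun i j => hinner Sum.inl_ne_inr⟩

theorem exists_unit_vectors_arcsin_inner_eq [Fintype ι] [Fintype κ] {c : ℝ} (hc : 0 ≤ c)
    (hc' : Real.sinh c ≤ 1) {u : ι → E} {v : κ → E} (hu : ∀ i, ‖u i‖ ≤ 1) (hv : ∀ j, ‖v j‖ ≤ 1) :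
    ∃ (u' : ι → EuclideanSpace ℝ (ι ⊕ κ)) (v' : κ → EuclideanSpace ℝ (ι ⊕ κ)),
      (∀ i, ‖u' i‖ = 1) ∧ (∀ j, ‖v' j‖ = 1) ∧
      ∀ i j, Real.arcsin (inner ℝ (u' i) (v' j)) = c * inner ℝ (u i) (v j) := by
  obtain ⟨u', v', hu', hv', hsin⟩ := exists_unit_vectors_inner_eq_sin hc hc' hu hv
  refine ⟨u', v', hu', hv', fun i j => ?_⟩
  have hinner : |c * inner ℝ (u i) (v j)| ≤ 1 := by
    rw [abs_mul, abs_of_nonneg hc]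
    exact mul_le_one₀ ((Real.self_le_sinh_iff.2 hc).trans hc') (abs_nonneg _) <|
      (abs_real_inner_le_norm _ _).trans <| mul_le_one₀ (hu i) (norm_nonneg _) (hv j)
  have hmem := abs_le.1 (hinner.trans Real.one_le_pi_div_two)
  rw [hsin, Real.arcsin_sin hmem.1 hmem.2]

end PositiveSemidefinite

section GaussianSigns

open MeasureTheory ProbabilityTheory Real
open scoped Matrix InnerProductSpace

variable {E : Type*} [NormedAddCommGroup E] [InnerProductSpace ℝ E] [FiniteDimensional ℝ E]
  [MeasurableSpace E] [BorelSpace E]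

theorem charFunDual_map_inner_stdGaussian {ι : Type*} [Fintype ι] [DecidableEq ι] (v : ι → E)
    (L : StrongDual ℝ (ι → ℝ)) :
    charFunDual ((stdGaussian E).map fun x i => ⟪v i, x⟫_ℝ) L =
      Complex.exp (-(((fun i => L (Pi.single i 1)) ⬝ᵥ
        (Matrix.gram ℝ v *ᵥ fun i => L (Pi.single i 1)) : ℝ) : ℂ) / 2) := by
  let c (i : ι) : ℝ := L (Pi.single i 1)
  let T : E →L[ℝ] ι → ℝ := .pi fun i => innerSL ℝ (v i)
  have hL (p : ι → ℝ) : L p = ∑ i, p i * c i := by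
    simpa [c] using congrArg L (pi_eq_sum_univ' p)
  have hT : L.comp T = innerSL ℝ (∑ i, c i • v i) := by
    ext x
    simp [hL, T, mul_comm]
  have hnorm : ‖∑ i, c i • v i‖ ^ 2 = c ⬝ᵥ (Matrix.gram ℝ v *ᵥ c) := by
    rw [← real_inner_self_eq_norm_sq, ← Matrix.star_dotProduct_gram_mulVec, star_trivial]
  change charFunDual ((stdGaussian E).map T) L = Complex.exp (-((c ⬝ᵥ (_ *ᵥ c) : ℝ) : ℂ) / 2)
  rw [charFunDual_map, charFunDual_stdGaussian, hT, innerSL_apply_norm, ← hnorm]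
  push_cast
  rfl

theorem map_inner_stdGaussian_eq_of_gram_eq {ι F : Type*} [Finite ι] [NormedAddCommGroup F]
    [InnerProductSpace ℝ F] [FiniteDimensional ℝ F] [MeasurableSpace F] [BorelSpace F]
    {v : ι → E} {w : ι → F} (h : Matrix.gram ℝ v = Matrix.gram ℝ w) :
    (stdGaussian E).map (fun x i => ⟪v i, x⟫_ℝ) = (stdGaussian F).map (fun y i => ⟪w i, y⟫_ℝ) := by
  classical
  have := Fintype.ofFinite ι
  refine Measure.ext_of_charFunDual (funext fun L => ?_)
  rw [charFunDual_map_inner_stdGaussian, charFunDual_map_inner_stdGaussian, h]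

theorem ae_stdGaussian_ne_zero [Nontrivial E] : ∀ᵐ x ∂stdGaussian E, x ≠ 0 := by
  obtain ⟨a, ha⟩ := exists_ne (0 : E)
  let L : StrongDual ℝ E := innerSL ℝ a
  have hvar : (Var[L; stdGaussian E]).toNNReal ≠ 0 := by
    rw [variance_dual_stdGaussian, innerSL_apply_norm]
    positivity
  have hL : ∀ᵐ x ∂stdGaussian E, L x ≠ 0 := by
    have := nullSingletonClass_gaussianReal (μ := (stdGaussian E)[L]) hvar
    rw [← ae_map_iff (p := (· ≠ 0)) L.continuous.aemeasurable (measurableSet_singleton 0).compl,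
      IsGaussian.map_eq_gaussianReal]
    exact Measure.ae_ne _ 0
  filter_upwards [hL] with x hx hx0
  exact hx (by rw [hx0, map_zero])

theorem circleAverage_zero_norm {F : Type*} [NormedAddCommGroup F] [NormedSpace ℝ F] (f : ℂ → F)
    (z : ℂ) :
    circleAverage f 0 ‖z‖ = (2 * π)⁻¹ • ∫ θ in 0..2 * π, f (rotation (Circle.exp θ) z) := by
  rw [circleAverage_eq_integral_add z.arg]
  congr! with θ
  rw [circleMap_zero, rotation_apply, Circle.coe_exp, Complex.ofReal_add, add_mul,
    Complex.exp_add, mul_left_comm, Complex.norm_mul_exp_arg_mul_I]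

theorem integral_eq_integral_circleAverage {F : Type*} [NormedAddCommGroup F] [NormedSpace ℝ F]
    [CompleteSpace F] {μ : Measure ℂ} [SFinite μ] (hμ : ∀ a : Circle, μ.map (rotation a) = μ)
    {f : ℂ → F} (hf : Integrable f μ) :
    ∫ z, f z ∂μ = ∫ z, circleAverage f 0 ‖z‖ ∂μ := by
  have : IsFiniteMeasure (volume.restrict (Set.uIoc 0 (2 * π))) :=
    isFiniteMeasure_restrict_Ioc _ _
  have hpres : MeasurePreserving (fun p : ℝ × ℂ => (p.1, rotation (Circle.exp p.1) p.2))
      ((volume.restrict (Set.uIoc 0 (2 * π))).prod μ)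
      ((volume.restrict (Set.uIoc 0 (2 * π))).prod μ) := by
    refine (MeasurePreserving.id _).skew_product ?_ (.of_forall fun θ => hμ _)
    simp only [Function.uncurry_def, rotation_apply, Circle.coe_exp]
    fun_prop
  have hint : Integrable (Function.uncurry fun θ z => f (rotation (Circle.exp θ) z))
      ((volume.restrict (Set.uIoc 0 (2 * π))).prod μ) :=
    hpres.integrable_comp_of_integrable (hf.comp_snd _)
  have hrotate (θ : ℝ) : ∫ z, f (rotation (Circle.exp θ) z) ∂μ = ∫ z, f z ∂μ :=
    MeasurePreserving.integral_comp' (f := (rotation (Circle.exp θ)).toMeasurableEquiv)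
      ⟨by fun_prop, hμ _⟩ f
  simp_rw [circleAverage_zero_norm]
  rw [integral_smul, ← intervalIntegral_integral_swap hint]
  simp only [hrotate, intervalIntegral.integral_const, sub_zero]
  rw [inv_smul_smul₀ two_pi_pos.ne']

@[fun_prop]
theorem measurable_real_sign : Measurable Real.sign :=
  .ite measurableSet_Iio measurable_const (.ite measurableSet_Ioi measurable_const measurable_const)

theorem abs_real_sign_le_one (x : ℝ) : |Real.sign x| ≤ 1 := by
  rcases Real.sign_apply_eq x with h | h | h <;> simp [h]

theorem real_sign_mul_of_pos {r : ℝ} (hr : 0 < r) (x : ℝ) :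
    Real.sign (r * x) = Real.sign x := by
  simp [Real.sign, mul_pos_iff_of_pos_left, mul_neg_iff, hr, hr.not_gt]

theorem intervalIntegrable_sign_cos (a b : ℝ) :
    IntervalIntegrable (fun θ => Real.sign (cos θ)) volume a b :=
  (intervalIntegrable_const (c := (1 : ℝ))).mono_fun
    (measurable_real_sign.comp measurable_cos).aestronglyMeasurable
    (.of_forall fun θ => by simpa using abs_real_sign_le_one (cos θ))

theorem integral_sign_cos_sub {α : ℝ} (hα : 0 ≤ α) (hα' : α ≤ π) :
    ∫ θ in -(π / 2)..π / 2, Real.sign (cos (θ - α)) = π - 2 * α := by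
  have hneg : ∫ θ in -(π / 2) - α..-(π / 2), Real.sign (cos θ) = -α := by
    rw [intervalIntegral.integral_congr_Ioo_of_le (g := fun _ => -1) (by linarith)]
    · simp
    · intro θ hθ
      refine Real.sign_of_neg ?_
      rw [← cos_neg]
      exact cos_neg_of_pi_div_two_lt_of_lt (by linarith [hθ.2]) (by linarith [hθ.1])
  have hpos : ∫ θ in -(π / 2)..π / 2 - α, Real.sign (cos θ) = π - α := by
    rw [intervalIntegral.integral_congr_Ioo_of_le (g := fun _ => 1) (by linarith)]
    · rw [intervalIntegral.integral_const, smul_eq_mul]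
      ring
    · intro θ hθ
      exact Real.sign_of_pos (cos_pos_of_mem_Ioo ⟨hθ.1, by linarith [hθ.2]⟩)
  rw [intervalIntegral.integral_comp_sub_right (fun θ => Real.sign (cos θ)),
    ← intervalIntegral.integral_add_adjacent_intervals
      (intervalIntegrable_sign_cos _ (-(π / 2))) (intervalIntegrable_sign_cos _ _), hneg, hpos]
  ring

theorem integral_sign_cos_mul_sign_cos_sub {α : ℝ} (hα : 0 ≤ α) (hα' : α ≤ π) :
    ∫ θ in 0..2 * π, Real.sign (cos θ) * Real.sign (cos (θ - α)) = 2 * π - 4 * α := by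
  have hint (a b : ℝ) :
      IntervalIntegrable (fun θ => Real.sign (cos θ) * Real.sign (cos (θ - α))) volume a b :=
    (intervalIntegrable_sign_cos a b).mono_fun (by fun_prop) <| .of_forall fun θ => by
      simpa [abs_mul] using mul_le_of_le_one_right (abs_nonneg _) (abs_real_sign_le_one _)
  have hperiodic : Function.Periodic (fun θ => Real.sign (cos θ) * Real.sign (cos (θ - α))) π := by
    intro θ
    simp [cos_add_pi, add_sub_right_comm, Real.sign_neg]
  have htwice : ∫ θ in 0..2 * π, Real.sign (cos θ) * Real.sign (cos (θ - α)) =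
      2 * ∫ θ in -(π / 2)..π / 2, Real.sign (cos θ) * Real.sign (cos (θ - α)) := by
    have h := hperiodic.intervalIntegral_add_zsmul_eq 2 0 hint
    rw [hperiodic.intervalIntegral_add_eq 0 (-(π / 2))] at h
    simpa [neg_add_eq_sub, sub_half] using h
  have hright : ∫ θ in -(π / 2)..π / 2, Real.sign (cos θ) * Real.sign (cos (θ - α)) =
      ∫ θ in -(π / 2)..π / 2, Real.sign (cos (θ - α)) :=
    intervalIntegral.integral_congr_Ioo_of_le (by linarith [pi_pos]) fun θ hθ => by
      simp [Real.sign_of_pos (cos_pos_of_mem_Ioo hθ)]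
  rw [htwice, hright, integral_sign_cos_sub hα hα']
  ring

theorem circleAverage_sign_inner_mul_sign_inner {α R : ℝ} (hα : 0 ≤ α) (hα' : α ≤ π)
    (hR : 0 < R) :
    circleAverage (fun z => Real.sign ⟪1, z⟫_ℝ * Real.sign ⟪Complex.exp (α * Complex.I), z⟫_ℝ) 0
      R = 1 - 2 / π * α := by
  have hone (θ : ℝ) : ⟪1, circleMap 0 R θ⟫_ℝ = R * cos θ := by
    rw [circleMap_zero, Complex.inner, map_one, mul_one, Complex.re_ofReal_mul,
      Complex.exp_ofReal_mul_I_re]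
  have hexp (θ : ℝ) : ⟪Complex.exp (α * Complex.I), circleMap 0 R θ⟫_ℝ = R * cos (θ - α) := by
    rw [Complex.inner, circleMap_zero, ← Complex.exp_conj, mul_assoc, ← Complex.exp_add,
      Complex.re_ofReal_mul, ← Complex.exp_ofReal_mul_I_re (θ - α)]
    simp [sub_eq_add_neg, add_mul]
  simp only [circleAverage_def, hone, hexp, real_sign_mul_of_pos hR,
    integral_sign_cos_mul_sign_cos_sub hα hα', smul_eq_mul]
  field_simp
  ring

theorem integral_sign_inner_mul_sign_inner_stdGaussian {a b : E} (ha : ‖a‖ = 1)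
    (hb : ‖b‖ = 1) :
    ∫ x, Real.sign ⟪a, x⟫_ℝ * Real.sign ⟪b, x⟫_ℝ ∂stdGaussian E = 2 / π * arcsin ⟪a, b⟫_ℝ := by
  let α := arccos ⟪a, b⟫_ℝ
  let e := Complex.exp (α * Complex.I)
  have hcos : cos α = ⟪a, b⟫_ℝ := by
    have := abs_le.1 (abs_real_inner_le_norm a b)
    rw [ha, hb, one_mul] at this
    exact cos_arccos this.1 this.2
  have hgram : Matrix.gram ℝ ![a, b] = Matrix.gram ℝ ![1, e] := by
    ext i j
    fin_cases i <;> fin_cases j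
    all_goals simp [Complex.inner, real_inner_comm, ha, hb, ← hcos, e, Complex.exp_ofReal_mul_I_re,
      Complex.norm_exp_ofReal_mul_I]
  let signs (p : Fin 2 → ℝ) : ℝ := Real.sign (p 0) * Real.sign (p 1)
  have hsigns : Measurable signs := by fun_prop
  have hplane : ∫ x, Real.sign ⟪a, x⟫_ℝ * Real.sign ⟪b, x⟫_ℝ ∂stdGaussian E =
      ∫ z, Real.sign ⟪1, z⟫_ℝ * Real.sign ⟪e, z⟫_ℝ ∂stdGaussian ℂ := by
    have h := congrArg (fun ν => ∫ p, signs p ∂ν) (map_inner_stdGaussian_eq_of_gram_eq hgram)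
    rwa [integral_map (by fun_prop) hsigns.aestronglyMeasurable,
      integral_map (by fun_prop) hsigns.aestronglyMeasurable] at h
  have hint : Integrable (fun z => Real.sign ⟪1, z⟫_ℝ * Real.sign ⟪e, z⟫_ℝ) (stdGaussian ℂ) :=
    .of_bound (by fun_prop) 1 <| .of_forall fun z => by
      simpa [abs_mul] using
        mul_le_one₀ (abs_real_sign_le_one _) (abs_nonneg _) (abs_real_sign_le_one _)
  rw [hplane, integral_eq_integral_circleAverage (fun c => stdGaussian_map (rotation c)) hint]
  trans ∫ z, (1 - 2 / π * α) ∂stdGaussian ℂ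
  · refine integral_congr_ae ?_
    filter_upwards [ae_stdGaussian_ne_zero] with z hz
    exact circleAverage_sign_inner_mul_sign_inner (arccos_nonneg _) (arccos_le_pi _)
      (norm_pos_iff.2 hz)
  · rw [integral_const, probReal_univ, one_smul, show α = π / 2 - arcsin ⟪a, b⟫_ℝ from
      arccos_eq_pi_div_two_sub_arcsin _]
    field_simp
    ring

end GaussianSigns

section Rounding

open MeasureTheory

variable {m n : ℕ} (A : Matrix (Fin m) (Fin n) ℝ)

theorem abs_sum_le_normInftyOne {p : Fin m → ℝ} {q : Fin n → ℝ} (hp : ∀ i, |p i| ≤ 1)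
    (hq : ∀ j, |q j| ≤ 1) : |∑ i, ∑ j, A i j * p i * q j| ≤ normInftyOne A := by
  refine le_csSup ⟨∑ i, ∑ j, |A i j|, ?_⟩ ⟨p, q, hp, hq, rfl⟩
  rintro _ ⟨p, q, hp, hq, rfl⟩
  refine (Finset.abs_sum_le_sum_abs _ _).trans (Finset.sum_le_sum fun i _ =>
    (Finset.abs_sum_le_sum_abs _ _).trans (Finset.sum_le_sum fun j _ => ?_))
  rw [mul_assoc, abs_mul, abs_mul]
  exact mul_le_of_le_one_right (abs_nonneg _) (mul_le_one₀ (hp i) (abs_nonneg _) (hq j))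

theorem abs_sum_integral_le_normInftyOne {Ω : Type*} [MeasurableSpace Ω] {μ : Measure Ω}
    [IsProbabilityMeasure μ] {P : Fin m → Ω → ℝ} {Q : Fin n → Ω → ℝ}
    (hP : ∀ i, AEStronglyMeasurable (P i) μ) (hQ : ∀ j, AEStronglyMeasurable (Q j) μ)
    (hP' : ∀ i ω, |P i ω| ≤ 1) (hQ' : ∀ j ω, |Q j ω| ≤ 1) :
    |∑ i, ∑ j, A i j * ∫ ω, P i ω * Q j ω ∂μ| ≤ normInftyOne A := by
  have hint (i : Fin m) (j : Fin n) : Integrable (fun ω => A i j * (P i ω * Q j ω)) μ :=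
    .const_mul (.of_bound ((hP i).mul (hQ j)) 1 <| .of_forall fun ω => by
      simpa [abs_mul] using mul_le_one₀ (hP' i ω) (abs_nonneg _) (hQ' j ω)) _
  have hsum : ∑ i, ∑ j, A i j * ∫ ω, P i ω * Q j ω ∂μ =
      ∫ ω, ∑ i, ∑ j, A i j * P i ω * Q j ω ∂μ := by
    simp_rw [mul_assoc]
    rw [integral_finsetSum _ fun i _ => integrable_finsetSum _ fun j _ => hint i j]
    simp_rw [integral_finsetSum _ fun j _ => hint _ j, integral_const_mul]
  have hbound (ω : Ω) : ‖∑ i, ∑ j, A i j * P i ω * Q j ω‖ ≤ normInftyOne A :=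
    abs_sum_le_normInftyOne A (fun i => hP' i ω) fun j => hQ' j ω
  simpa [hsum] using norm_integral_le_of_norm_le_const (μ := μ) (.of_forall hbound)

end Rounding

section Krivine

open MeasureTheory ProbabilityTheory

theorem sinh_log_one_add_sqrt_two : Real.sinh (Real.log (1 + √2)) = 1 := by
  simpa [Real.arsinh, one_add_one_eq_two] using Real.sinh_arsinh 1

theorem real_grothendieck_krivine_bound_general {m n : ℕ} {E : Type*} [SeminormedAddCommGroup E]
    [InnerProductSpace ℝ E] (A : Matrix (Fin m) (Fin n) ℝ) {u : Fin m → E} {v : Fin n → E}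
    (hu : ∀ i, ‖u i‖ ≤ 1) (hv : ∀ j, ‖v j‖ ≤ 1) :
    |∑ i, ∑ j, A i j * inner ℝ (u i) (v j)| ≤
      Real.pi / (2 * Real.log (1 + √2)) * normInftyOne A := by
  set c := Real.log (1 + √2)
  have hc : 0 < c := Real.log_pos (by simp)
  obtain ⟨u', v', hu', hv', harcsin⟩ :=
    exists_unit_vectors_arcsin_inner_eq hc.le sinh_log_one_add_sqrt_two.le hu hv
  have hround (i : Fin m) (j : Fin n) : inner ℝ (u i) (v j) = Real.pi / (2 * c) *
      ∫ x, Real.sign (inner ℝ (u' i) x) * Real.sign (inner ℝ (v' j) x)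
        ∂stdGaussian (EuclideanSpace ℝ (Fin m ⊕ Fin n)) := by
    rw [integral_sign_inner_mul_sign_inner_stdGaussian (hu' i) (hv' j), harcsin]
    field_simp
  simp_rw [hround, mul_left_comm (A _ _), ← Finset.mul_sum]
  rw [abs_mul, abs_of_pos (by positivity)]
  gcongr
  exact abs_sum_integral_le_normInftyOne A
    (fun i => (measurable_real_sign.comp (by fun_prop)).aestronglyMeasurable)
    (fun j => (measurable_real_sign.comp (by fun_prop)).aestronglyMeasurable)
    (fun i x => abs_real_sign_le_one _) fun j x => abs_real_sign_le_one _

end Krivine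

/-- Real Grothendieck inequality with Krivine's constant `π / (2 log(1 + √2))`. -/
theorem real_grothendieck_krivine_bound
    (m n d : ℕ) (A : Matrix (Fin m) (Fin n) ℝ)
    (u : Fin m → EuclideanSpace ℝ (Fin d)) (v : Fin n → EuclideanSpace ℝ (Fin d))
    (hu : ∀ i, ‖u i‖ = 1) (hv : ∀ j, ‖v j‖ = 1) :
    |∑ i, ∑ j, A i j * (inner ℝ (u i) (v j) : ℝ)| ≤
      (Real.pi / (2 * Real.log (1 + Real.sqrt 2))) * normInftyOne A :=
  real_grothendieck_krivine_bound_general A (fun i => (hu i).le) fun j => (hv j).le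
end

section
/- Little Grothendieck inequality, real case (k_G^ℝ = π/2, upper bound): for all n, d ∈ ℕ, every real positive semidefinite n×n matrix A, and all vectors u_1, …, u_n in the Euclidean space ℝ^d with ‖u_i‖ = 1 for all i, one has 0 ≤ ∑_{i=1}^n ∑_{j=1}^n A i j · ⟨u_i, u_j⟩ ≤ (π/2) · ‖A‖_{∞,1}. -/
open scoped BigOperators

/-!
Let `g` be a standard Gaussian vector and round `uᵢ` to `zᵢ = ‖uᵢ‖ sign ⟪uᵢ, g⟫ ∈ [-1, 1]`.
Splitting `v` into a multiple of `uᵢ` and a vector orthogonal to `uᵢ`, on which `g` has independent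
coordinates, gives `𝔼[zᵢ ⟪v, g⟫] = c ⟪uᵢ, v⟫` with `c = 𝔼|N(0, 1)| = √(2 / π)`. Hence
`yᵢ = c ⟪uᵢ, g⟫` is the orthogonal projection in `L²` of `zᵢ` onto the linear functionals of `g`, so
the Gram matrix of `z - y` is the difference of those of `z` and `y`. Pairing it with the positive
semidefinite `A` yields
`c² ∑ Aᵢⱼ ⟪uᵢ, uⱼ⟫ = ∑ Aᵢⱼ ⟪yᵢ, yⱼ⟫ ≤ ∑ Aᵢⱼ ⟪zᵢ, zⱼ⟫ = 𝔼 ∑ Aᵢⱼ zᵢ zⱼ ≤ ‖A‖_{∞,1}`.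
-/

open MeasureTheory ProbabilityTheory
open scoped RealInnerProductSpace NNReal

section PosSemidef

variable {ι H : Type*} [Fintype ι] [SeminormedAddCommGroup H] [InnerProductSpace ℝ H]
  {A : Matrix ι ι ℝ}

lemma sum_mul_inner_nonneg_of_posSemidef (hA : A.PosSemidef) (x : ι → H) :
    0 ≤ ∑ i, ∑ j, A i j * ⟪x i, x j⟫ := by
  simpa [dotProduct, Matrix.mulVec] using
    (hA.hadamard (Matrix.posSemidef_gram ℝ x)).dotProduct_mulVec_nonneg 1

lemma sum_mul_inner_le_of_inner_eq (hA : A.PosSemidef) {y z : ι → H}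
    (h : ∀ i j, ⟪y i, z j⟫ = ⟪y i, y j⟫) :
    ∑ i, ∑ j, A i j * ⟪y i, y j⟫ ≤ ∑ i, ∑ j, A i j * ⟪z i, z j⟫ := by
  have gram_sub (i j : ι) : ⟪z i - y i, z j - y j⟫ = ⟪z i, z j⟫ - ⟪y i, y j⟫ := by
    have h' : ⟪z i, y j⟫ = ⟪y i, y j⟫ := by rw [real_inner_comm, h, real_inner_comm]
    rw [inner_sub_left, inner_sub_right, inner_sub_right, h, h']
    ring
  have := sum_mul_inner_nonneg_of_posSemidef hA fun i ↦ z i - y i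
  simpa only [gram_sub, mul_sub, Finset.sum_sub_distrib, sub_nonneg] using this

end PosSemidef

section NormInftyOne

variable {m n : ℕ}

lemma abs_sum_mul_mul_le_normInftyOne (A : Matrix (Fin m) (Fin n) ℝ) {p : Fin m → ℝ}
    {q : Fin n → ℝ} (hp : ∀ i, |p i| ≤ 1) (hq : ∀ j, |q j| ≤ 1) :
    |∑ i, ∑ j, A i j * p i * q j| ≤ normInftyOne A := by
  refine le_csSup ⟨∑ i, ∑ j, |A i j|, ?_⟩ ⟨p, q, hp, hq, rfl⟩
  rintro _ ⟨p, q, hp, hq, rfl⟩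
  refine (Finset.abs_sum_le_sum_abs _ _).trans <| Finset.sum_le_sum fun i _ ↦
    (Finset.abs_sum_le_sum_abs _ _).trans <| Finset.sum_le_sum fun j _ ↦ ?_
  rw [abs_mul, abs_mul, mul_assoc]
  exact mul_le_of_le_one_right (abs_nonneg _) (mul_le_one₀ (hp i) (abs_nonneg _) (hq j))

lemma sum_mul_integral_mul_le_normInftyOne {Ω : Type*} {mΩ : MeasurableSpace Ω} {μ : Measure Ω}
    [IsProbabilityMeasure μ] (A : Matrix (Fin m) (Fin n) ℝ)
    {f : Fin m → Ω → ℝ} {g : Fin n → Ω → ℝ}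
    (hf : ∀ i, AEStronglyMeasurable (f i) μ) (hg : ∀ j, AEStronglyMeasurable (g j) μ)
    (hf_le : ∀ i ω, |f i ω| ≤ 1) (hg_le : ∀ j ω, |g j ω| ≤ 1) :
    ∑ i, ∑ j, A i j * ∫ ω, f i ω * g j ω ∂μ ≤ normInftyOne A := by
  have integrable_term (i : Fin m) (j : Fin n) :
      Integrable (fun ω ↦ A i j * f i ω * g j ω) μ :=
    ((Integrable.of_bound (hf i) 1 (.of_forall (hf_le i))).const_mul _).mul_bdd (hg j)
      (.of_forall (hg_le j))
  have integrable_row (i : Fin m) : Integrable (fun ω ↦ ∑ j, A i j * f i ω * g j ω) μ :=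
    integrable_finsetSum _ fun j _ ↦ integrable_term i j
  calc ∑ i, ∑ j, A i j * ∫ ω, f i ω * g j ω ∂μ
      = ∫ ω, ∑ i, ∑ j, A i j * f i ω * g j ω ∂μ := by
        rw [integral_finsetSum _ fun i _ ↦ integrable_row i]
        refine Finset.sum_congr rfl fun i _ ↦ ?_
        rw [integral_finsetSum _ fun j _ ↦ integrable_term i j]
        simp only [mul_assoc, integral_const_mul]
    _ ≤ ∫ _, normInftyOne A ∂μ :=
        integral_mono (integrable_finsetSum _ fun i _ ↦ integrable_row i) (integrable_const _)
          fun ω ↦ (le_abs_self _).trans <|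
            abs_sum_mul_mul_le_normInftyOne A (hf_le · ω) (hg_le · ω)
    _ = normInftyOne A := by simp

end NormInftyOne

lemma inner_toLp_toLp {𝕜 F Ω : Type*} [RCLike 𝕜] [NormedAddCommGroup F] [InnerProductSpace 𝕜 F]
    {mΩ : MeasurableSpace Ω} {μ : Measure Ω} {f g : Ω → F} (hf : MemLp f 2 μ) (hg : MemLp g 2 μ) :
    inner 𝕜 (hf.toLp f) (hg.toLp g) = ∫ ω, inner 𝕜 (f ω) (g ω) ∂μ := by
  rw [L2.inner_def]
  refine integral_congr_ae ?_
  filter_upwards [hf.coeFn_toLp, hg.coeFn_toLp] with ω hfω hgω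
  rw [hfω, hgω]

lemma abs_coe_sign_le_one {R : Type*} [Ring R] [LinearOrder R] [IsStrictOrderedRing R] (x : R) :
    |(SignType.sign x : R)| ≤ 1 := by
  rcases lt_trichotomy x 0 with hx | rfl | hx <;> simp [*]

lemma measurable_coe_sign : Measurable fun x : ℝ ↦ (SignType.sign x : ℝ) := by
  have monotone_coe : Monotone ((↑) : SignType → ℝ) := by
    intro a b hab
    cases a <;> cases b <;> first | simp; done | exact absurd hab (by decide)
  exact (monotone_coe.comp SignType.sign.monotone).measurable

lemma integral_abs_gaussianReal (v : ℝ≥0) :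
    ∫ x, |x| ∂gaussianReal 0 v = √(2 / Real.pi) * √v := by
  rcases eq_or_ne v 0 with rfl | hv
  · simp
  calc ∫ x, |x| ∂gaussianReal 0 v
      = ∫ x, (√(2 * Real.pi * v))⁻¹ *
          (|x| ^ (1 : ℝ) * Real.exp (-(2 * v : ℝ)⁻¹ * |x| ^ (2 : ℝ))) := by
        rw [integral_gaussianReal_eq_integral_smul hv]
        refine integral_congr_ae (.of_forall fun x ↦ ?_)
        simp only [gaussianPDFReal, smul_eq_mul, Real.rpow_one, Real.rpow_two, sq_abs, sub_zero]
        rw [mul_assoc, mul_comm |x|, neg_div, div_eq_inv_mul, neg_mul]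
    _ = (√(2 * Real.pi * v))⁻¹ * (2 * v) := by
        rw [integral_const_mul, integral_comp_abs (f := fun t : ℝ ↦
            t ^ (1 : ℝ) * Real.exp (-(2 * v : ℝ)⁻¹ * t ^ (2 : ℝ))),
          integral_rpow_mul_exp_neg_mul_rpow two_pos (by norm_num) (by positivity)]
        congr 1
        norm_num [Real.rpow_neg_one]
        ring
    _ = √(2 / Real.pi) * √v := by
        have square : 2 * Real.pi * v * (2 / Real.pi * v) = (2 * v : ℝ) ^ 2 := by
          field_simp
        rw [inv_mul_eq_iff_eq_mul₀ (by positivity), ← Real.sqrt_mul (by positivity),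
          ← Real.sqrt_mul (by positivity), square, Real.sqrt_sq (by positivity)]

section HyperplaneRounding

variable {E : Type*} [NormedAddCommGroup E] [InnerProductSpace ℝ E]

/-- Random hyperplane rounding: `u` becomes a number of modulus at most `‖u‖`, whose sign records
the side of the hyperplane `xᗮ` on which `u` lies (`0` on `xᗮ`); `x` will be a Gaussian vector.
Scaling the sign by `‖u‖` makes the correlation with `⟪v, x⟫` linear in `u`. -/
noncomputable def hyperplaneRounding (u x : E) : ℝ := ‖u‖ * SignType.sign ⟪u, x⟫

lemma abs_hyperplaneRounding_le (u x : E) : |hyperplaneRounding u x| ≤ ‖u‖ := by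
  rw [hyperplaneRounding, abs_mul, abs_norm]
  exact mul_le_of_le_one_right (norm_nonneg u) (abs_coe_sign_le_one _)

lemma measurable_hyperplaneRounding [MeasurableSpace E] [OpensMeasurableSpace E] (u : E) :
    Measurable (hyperplaneRounding u) :=
  (measurable_coe_sign.comp (by fun_prop : Continuous (⟪u, ·⟫)).measurable).const_mul _

variable [FiniteDimensional ℝ E] [MeasurableSpace E] [BorelSpace E]

lemma memLp_inner_stdGaussian (v : E) : MemLp (fun x ↦ ⟪v, x⟫) 2 (stdGaussian E) :=
  IsGaussian.memLp_two_id.const_inner v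

lemma map_inner_stdGaussian (u : E) :
    (stdGaussian E).map (fun x ↦ ⟪u, x⟫) = gaussianReal 0 (‖u‖₊ ^ 2) := by
  have h := IsGaussian.map_eq_gaussianReal (μ := stdGaussian E) (innerSL ℝ u)
  rw [variance_dual_stdGaussian, integral_strongDual_stdGaussian, innerSL_apply_norm] at h
  rw [← Real.toNNReal_coe (r := ‖u‖₊ ^ 2)]
  simpa using h

lemma integral_abs_inner_stdGaussian (u : E) :
    ∫ x, |⟪u, x⟫| ∂stdGaussian E = √(2 / Real.pi) * ‖u‖ := by
  calc ∫ x, |⟪u, x⟫| ∂stdGaussian E = ∫ t, |t| ∂gaussianReal 0 (‖u‖₊ ^ 2) := by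
        rw [← map_inner_stdGaussian, integral_map (by fun_prop) (by fun_prop)]
    _ = √(2 / Real.pi) * ‖u‖ := by simp [integral_abs_gaussianReal]

lemma integral_inner_stdGaussian (v : E) : ∫ x, ⟪v, x⟫ ∂stdGaussian E = 0 :=
  integral_strongDual_stdGaussian (innerSL ℝ v)

lemma covariance_inner_stdGaussian (u v : E) :
    cov[fun x ↦ ⟪u, x⟫, fun x ↦ ⟪v, x⟫; stdGaussian E] = ⟪u, v⟫ := by
  rw [← covarianceBilin_apply_eq_cov IsGaussian.memLp_two_id, covarianceBilin_stdGaussian,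
    innerSL_apply_apply]

lemma integral_inner_mul_inner_stdGaussian (u v : E) :
    ∫ x, ⟪u, x⟫ * ⟪v, x⟫ ∂stdGaussian E = ⟪u, v⟫ := by
  have h := covariance_eq_sub (memLp_inner_stdGaussian u) (memLp_inner_stdGaussian v)
  rw [covariance_inner_stdGaussian, integral_inner_stdGaussian, zero_mul, sub_zero] at h
  exact h.symm

lemma indepFun_inner_stdGaussian {u v : E} (huv : ⟪u, v⟫ = 0) :
    IndepFun (fun x ↦ ⟪u, x⟫) (fun x ↦ ⟪v, x⟫) (stdGaussian E) :=
  HasGaussianLaw.indepFun_of_covariance_eq_zero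
    (IsGaussian.hasGaussianLaw_id.map ((innerSL ℝ u).prod (innerSL ℝ v)))
    ((covariance_inner_stdGaussian u v).trans huv)

lemma memLp_hyperplaneRounding (u : E) : MemLp (hyperplaneRounding u) 2 (stdGaussian E) :=
  .of_bound (measurable_hyperplaneRounding u).aestronglyMeasurable ‖u‖
    (.of_forall (abs_hyperplaneRounding_le u))

lemma integral_hyperplaneRounding_mul_inner_self (u : E) :
    ∫ x, hyperplaneRounding u x * ⟪u, x⟫ ∂stdGaussian E = √(2 / Real.pi) * ‖u‖ ^ 2 := by
  simp only [hyperplaneRounding, mul_assoc, sign_mul_self, integral_const_mul,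
    integral_abs_inner_stdGaussian]
  ring

lemma integral_hyperplaneRounding_mul_inner_of_inner_eq_zero {u w : E} (huw : ⟪u, w⟫ = 0) :
    ∫ x, hyperplaneRounding u x * ⟪w, x⟫ ∂stdGaussian E = 0 := by
  have h := (indepFun_inner_stdGaussian huw).integral_fun_comp_mul_comp
    (f := fun t ↦ ‖u‖ * (SignType.sign t : ℝ)) (g := id) (by fun_prop) (by fun_prop)
    (measurable_coe_sign.const_mul _).aestronglyMeasurable (by fun_prop)
  simpa only [hyperplaneRounding, id_eq, integral_inner_stdGaussian, mul_zero] using h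

lemma integral_hyperplaneRounding_mul_inner (u v : E) :
    ∫ x, hyperplaneRounding u x * ⟪v, x⟫ ∂stdGaussian E = √(2 / Real.pi) * ⟪u, v⟫ := by
  obtain ⟨_, hau, w, hw, rfl⟩ := (Submodule.span ℝ {u}).exists_add_mem_mem_orthogonal v
  obtain ⟨a, rfl⟩ := Submodule.mem_span_singleton.1 hau
  have huw : ⟪u, w⟫ = 0 := Submodule.mem_orthogonal_singleton_iff_inner_right.1 hw
  have integrable_mul_inner (v : E) :
      Integrable (fun x ↦ hyperplaneRounding u x * ⟪v, x⟫) (stdGaussian E) :=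
    (memLp_hyperplaneRounding u).integrable_mul (memLp_inner_stdGaussian v)
  calc ∫ x, hyperplaneRounding u x * ⟪a • u + w, x⟫ ∂stdGaussian E
      = ∫ x, a * (hyperplaneRounding u x * ⟪u, x⟫) + hyperplaneRounding u x * ⟪w, x⟫
          ∂stdGaussian E := by
        simp only [inner_add_left, real_inner_smul_left, mul_add, mul_left_comm]
    _ = a * (√(2 / Real.pi) * ‖u‖ ^ 2) := by
        rw [integral_add ((integrable_mul_inner u).const_mul a) (integrable_mul_inner w),
          integral_const_mul, integral_hyperplaneRounding_mul_inner_self,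
          integral_hyperplaneRounding_mul_inner_of_inner_eq_zero huw, add_zero]
    _ = √(2 / Real.pi) * ⟪u, a • u + w⟫ := by
        rw [inner_add_right, real_inner_smul_right, huw, real_inner_self_eq_norm_sq]
        ring

end HyperplaneRounding

lemma two_div_pi_mul_sum_mul_inner_le_normInftyOne {n : ℕ} {E : Type*} [NormedAddCommGroup E]
    [InnerProductSpace ℝ E] [FiniteDimensional ℝ E] {A : Matrix (Fin n) (Fin n) ℝ}
    (hA : A.PosSemidef) {u : Fin n → E} (hu : ∀ i, ‖u i‖ ≤ 1) :
    2 / Real.pi * ∑ i, ∑ j, A i j * ⟪u i, u j⟫ ≤ normInftyOne A := by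
  borelize E
  set c := √(2 / Real.pi) with hc
  have hcc : c * c = 2 / Real.pi := Real.mul_self_sqrt (by positivity)
  let y (i : Fin n) : Lp ℝ 2 (stdGaussian E) :=
    ((memLp_inner_stdGaussian (u i)).const_mul c).toLp
  let z (i : Fin n) : Lp ℝ 2 (stdGaussian E) := (memLp_hyperplaneRounding (u i)).toLp
  have inner_y_y (i j : Fin n) : ⟪y i, y j⟫ = 2 / Real.pi * ⟪u i, u j⟫ := by
    simp only [y, inner_toLp_toLp, RCLike.inner_apply', conj_trivial, mul_assoc,
      mul_left_comm _ c, integral_const_mul, integral_inner_mul_inner_stdGaussian]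
    rw [← mul_assoc, hcc]
  have inner_y_z (i j : Fin n) : ⟪y i, z j⟫ = 2 / Real.pi * ⟪u i, u j⟫ := by
    simp only [y, z, inner_toLp_toLp, RCLike.inner_apply, conj_trivial, mul_left_comm _ c,
      integral_const_mul, integral_hyperplaneRounding_mul_inner, ← hc, real_inner_comm (u i)]
    rw [← mul_assoc, hcc]
  calc 2 / Real.pi * ∑ i, ∑ j, A i j * ⟪u i, u j⟫ = ∑ i, ∑ j, A i j * ⟪y i, y j⟫ := by
        simp only [inner_y_y, mul_left_comm, Finset.mul_sum]
    _ ≤ ∑ i, ∑ j, A i j * ⟪z i, z j⟫ :=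
        sum_mul_inner_le_of_inner_eq hA fun i j ↦ (inner_y_z i j).trans (inner_y_y i j).symm
    _ = ∑ i, ∑ j, A i j * ∫ x, hyperplaneRounding (u i) x * hyperplaneRounding (u j) x
          ∂stdGaussian E := by simp only [z, inner_toLp_toLp, RCLike.inner_apply', conj_trivial]
    _ ≤ normInftyOne A :=
        sum_mul_integral_mul_le_normInftyOne A
          (fun i ↦ (memLp_hyperplaneRounding (u i)).aestronglyMeasurable)
          (fun i ↦ (memLp_hyperplaneRounding (u i)).aestronglyMeasurable)
          (fun i x ↦ (abs_hyperplaneRounding_le (u i) x).trans (hu i))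
          (fun i x ↦ (abs_hyperplaneRounding_le (u i) x).trans (hu i))

theorem little_grothendieck_real_general {n : ℕ} {E : Type*} [NormedAddCommGroup E]
    [InnerProductSpace ℝ E] {A : Matrix (Fin n) (Fin n) ℝ} (hA : A.PosSemidef)
    {u : Fin n → E} (hu : ∀ i, ‖u i‖ ≤ 1) :
    0 ≤ ∑ i, ∑ j, A i j * ⟪u i, u j⟫ ∧
      ∑ i, ∑ j, A i j * ⟪u i, u j⟫ ≤ Real.pi / 2 * normInftyOne A := by
  refine ⟨sum_mul_inner_nonneg_of_posSemidef hA u, ?_⟩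
  have := FiniteDimensional.span_of_finite ℝ (Set.finite_range u)
  let u' (i : Fin n) : Submodule.span ℝ (Set.range u) :=
    ⟨u i, Submodule.subset_span (Set.mem_range_self i)⟩
  have h : 2 / Real.pi * ∑ i, ∑ j, A i j * ⟪u i, u j⟫ ≤ normInftyOne A :=
    two_div_pi_mul_sum_mul_inner_le_normInftyOne hA (u := u') hu
  rwa [← inv_div, inv_mul_le_iff₀ (by positivity)] at h

/-- Little Grothendieck inequality, real case: for positive semidefinite `A` and unit
vectors `u i` in `ℝ^d`, `0 ≤ ∑ i j, A i j ⟪u i, u j⟫ ≤ (π/2) ‖A‖_{∞,1}`. -/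
theorem little_grothendieck_real
    (n d : ℕ) (A : Matrix (Fin n) (Fin n) ℝ) (hA : A.PosSemidef)
    (u : Fin n → EuclideanSpace ℝ (Fin d)) (hu : ∀ i, ‖u i‖ = 1) :
    0 ≤ ∑ i, ∑ j, A i j * (inner ℝ (u i) (u j) : ℝ) ∧
      ∑ i, ∑ j, A i j * (inner ℝ (u i) (u j) : ℝ) ≤ (Real.pi / 2) * normInftyOne A :=
  little_grothendieck_real_general hA fun i ↦ (hu i).le
end

section
/- Generalised Krivine estimate for bounded kernels: let k, m, n, d ∈ ℕ, let f, g : ℝ^k → ℝ be measurable with |f(x)| ≤ M_f and |g(x)| ≤ M_g for all x. Then for every real m×n matrix A and all vectors u_1, …, u_m, v_1, …, v_n in the Euclidean space ℝ^d with ‖u_i‖ = 1 and ‖v_j‖ = 1, one has |∑_{i=1}^m ∑_{j=1}^n A i j · h_{f,g}(⟨u_i, v_j⟩)| ≤ M_f · M_g · ‖A‖_{∞,1}. -/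
open scoped BigOperators
open MeasureTheory ProbabilityTheory

/-- The standard Gaussian product measure `γ_k` on `ℝ^k`. -/
noncomputable def gaussK (k : ℕ) : Measure (Fin k → ℝ) :=
  Measure.pi fun _ => gaussianReal 0 1

/-- `h_{f,g}(ρ) = ∫∫ f(x) g(ρ x + √(1-ρ²) y) dγ_k(x) dγ_k(y)`. -/
noncomputable def hfg {k : ℕ} (f g : (Fin k → ℝ) → ℝ) (ρ : ℝ) : ℝ :=
  ∫ x, ∫ y, f x * g (fun i => ρ * x i + Real.sqrt (1 - ρ ^ 2) * y i)
    ∂(gaussK k) ∂(gaussK k)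

/-!
Put independent standard Gaussian vectors `ω₁, …, ω_k` in the span of the `u i` and `v j`. For unit
vectors `u`, `v` the pair `(⟪u, ω_l⟫, ⟪v, ω_l⟫)` is Gaussian with correlation `⟪u, v⟫`, as its
characteristic function shows, so `h_{f,g}(⟪u, v⟫) = E[f(⟪u, ω⟫) g(⟪v, ω⟫)]`. This couples all
entries of the kernel on one probability space: the sum in question is the expectation of
`∑ A i j * p i * q j` with `p i = f(⟪u i, ω⟫)` and `q j = g(⟪v j, ω⟫)`, and is bounded pointwise by
`Mf * Mg * normInftyOne A`.
-/

open scoped NNReal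

section BilinearForm

variable {m n : ℕ} (A : Matrix (Fin m) (Fin n) ℝ)

lemma bddAbove_abs_bilinear_unitBalls :
    BddAbove {x : ℝ | ∃ p : Fin m → ℝ, ∃ q : Fin n → ℝ,
      (∀ i, |p i| ≤ 1) ∧ (∀ j, |q j| ≤ 1) ∧ x = |∑ i, ∑ j, A i j * p i * q j|} := by
  refine ⟨∑ i, ∑ j, |A i j|, ?_⟩
  rintro _ ⟨p, q, hp, hq, rfl⟩
  refine (Finset.abs_sum_le_sum_abs _ _).trans (Finset.sum_le_sum fun i _ => ?_)
  refine (Finset.abs_sum_le_sum_abs _ _).trans (Finset.sum_le_sum fun j _ => ?_)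
  rw [mul_assoc, abs_mul, abs_mul]
  exact mul_le_of_le_one_right (abs_nonneg _) (mul_le_one₀ (hp i) (abs_nonneg _) (hq j))

lemma exists_eq_mul_of_abs_le {K : Type*} [Field K] [LinearOrder K] [IsStrictOrderedRing K]
    {x c : K} (hx : |x| ≤ c) : ∃ y, |y| ≤ 1 ∧ x = c * y := by
  refine ⟨x / c, ?_, (mul_div_cancel_of_imp' fun hc => ?_).symm⟩
  · rw [abs_div]
    exact div_le_one_of_le₀ (hx.trans (le_abs_self c)) (abs_nonneg c)
  · exact abs_nonpos_iff.mp (hx.trans hc.le)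

lemma abs_bilinear_le_mul_normInftyOne {a b : ℝ} (ha : 0 ≤ a) (hb : 0 ≤ b)
    {p : Fin m → ℝ} {q : Fin n → ℝ} (hp : ∀ i, |p i| ≤ a) (hq : ∀ j, |q j| ≤ b) :
    |∑ i, ∑ j, A i j * (p i * q j)| ≤ a * b * normInftyOne A := by
  choose p' hp' hp_eq using fun i => exists_eq_mul_of_abs_le (hp i)
  choose q' hq' hq_eq using fun j => exists_eq_mul_of_abs_le (hq j)
  have hscale : ∑ i, ∑ j, A i j * (p i * q j) = a * b * ∑ i, ∑ j, A i j * p' i * q' j := by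
    simp only [Finset.mul_sum, hp_eq, hq_eq]
    exact Finset.sum_congr rfl fun i _ => Finset.sum_congr rfl fun j _ => by ring
  rw [hscale, abs_mul, abs_of_nonneg (mul_nonneg ha hb)]
  gcongr
  exact le_csSup (bddAbove_abs_bilinear_unitBalls A) ⟨p', q', hp', hq', rfl⟩

end BilinearForm

section Integrals

variable {Ω : Type*} [MeasurableSpace Ω] {μ : Measure Ω} {a b : ℝ}

lemma integrable_mul_of_abs_le [IsFiniteMeasure μ] {F G : Ω → ℝ}
    (hF : AEStronglyMeasurable F μ) (hG : AEStronglyMeasurable G μ)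
    (hFa : ∀ ω, |F ω| ≤ a) (hGb : ∀ ω, |G ω| ≤ b) : Integrable (fun ω => F ω * G ω) μ :=
  (Integrable.of_bound hF a (ae_of_all μ hFa)).mul_bdd hG (ae_of_all μ hGb)

lemma abs_bilinear_integral_le_mul_normInftyOne [IsProbabilityMeasure μ] {m n : ℕ}
    (A : Matrix (Fin m) (Fin n) ℝ) {F : Fin m → Ω → ℝ} {G : Fin n → Ω → ℝ}
    (ha : 0 ≤ a) (hb : 0 ≤ b)
    (hF : ∀ i, AEStronglyMeasurable (F i) μ) (hG : ∀ j, AEStronglyMeasurable (G j) μ)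
    (hFa : ∀ i ω, |F i ω| ≤ a) (hGb : ∀ j ω, |G j ω| ≤ b) :
    |∑ i, ∑ j, A i j * ∫ ω, F i ω * G j ω ∂μ| ≤ a * b * normInftyOne A := by
  have hint (i j) : Integrable (fun ω => A i j * (F i ω * G j ω)) μ :=
    (integrable_mul_of_abs_le (hF i) (hG j) (hFa i) (hGb j)).const_mul _
  have hswap : ∑ i, ∑ j, A i j * ∫ ω, F i ω * G j ω ∂μ =
      ∫ ω, ∑ i, ∑ j, A i j * (F i ω * G j ω) ∂μ := by
    simp_rw [← integral_const_mul]
    rw [integral_finsetSum _ fun i _ => integrable_finsetSum _ fun j _ => hint i j]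
    exact Finset.sum_congr rfl fun i _ => (integral_finsetSum _ fun j _ => hint i j).symm
  have hpoint (ω : Ω) : ‖∑ i, ∑ j, A i j * (F i ω * G j ω)‖ ≤ a * b * normInftyOne A :=
    abs_bilinear_le_mul_normInftyOne A ha hb (hFa · ω) (hGb · ω)
  rw [hswap]
  simpa using norm_integral_le_of_norm_le_const (ae_of_all μ hpoint)

end Integrals

section CorrelatedGaussian

lemma charFunDual_gaussianReal (μ : ℝ) (v : ℝ≥0) (L : StrongDual ℝ ℝ) :
    charFunDual (gaussianReal μ v) L =
      Complex.exp (L 1 * μ * Complex.I - v * (L 1 : ℂ) ^ 2 / 2) := by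
  have hL (x : ℝ) : L x = L 1 * x := by simpa [mul_comm] using map_smul L x 1
  rw [← charFun_gaussianReal, charFun_apply_real, charFunDual_apply]
  simp only [← Complex.ofReal_mul, ← hL]

lemma map_prodMk_eq_smul_add_smul {R M F : Type*} [Semiring R] [AddCommMonoid M] [Module R M]
    [FunLike F (R × R) M] [LinearMapClass F R (R × R) M] (L : F) (s t : R) :
    L (s, t) = s • L (1, 0) + t • L (0, 1) := by
  rw [← map_smul, ← map_smul, ← map_add]
  simp

/-- The law on `ℝ × ℝ` of a pair of jointly Gaussian standard variables with correlation `ρ`,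
realised as `(x, ρ x + √(1 - ρ²) y)` with `x`, `y` independent; it is meant for `|ρ| ≤ 1`, since
`Real.sqrt` vanishes on negative numbers. -/
noncomputable def correlatedGaussian (ρ : ℝ) : Measure (ℝ × ℝ) :=
  ((gaussianReal 0 1).prod (gaussianReal 0 1)).map
    fun p => (p.1, ρ * p.1 + Real.sqrt (1 - ρ ^ 2) * p.2)

lemma measurePreserving_correlatedGaussian (ρ : ℝ) :
    MeasurePreserving (fun p : ℝ × ℝ => (p.1, ρ * p.1 + Real.sqrt (1 - ρ ^ 2) * p.2))
      ((gaussianReal 0 1).prod (gaussianReal 0 1)) (correlatedGaussian ρ) :=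
  Measurable.measurePreserving (by fun_prop) _

instance isProbabilityMeasure_correlatedGaussian (ρ : ℝ) :
    IsProbabilityMeasure (correlatedGaussian ρ) :=
  Measure.isProbabilityMeasure_map (by fun_prop)

lemma charFunDual_correlatedGaussian {ρ : ℝ} (hρ : |ρ| ≤ 1) (L : StrongDual ℝ (ℝ × ℝ)) :
    charFunDual (correlatedGaussian ρ) L =
      Complex.exp (-((L (1, 0) ^ 2 + 2 * ρ * L (1, 0) * L (0, 1) + L (0, 1) ^ 2) / 2 : ℝ)) := by
  let T : ℝ × ℝ →L[ℝ] ℝ × ℝ := (ContinuousLinearMap.fst ℝ ℝ ℝ).prod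
    (ρ • ContinuousLinearMap.fst ℝ ℝ ℝ + Real.sqrt (1 - ρ ^ 2) • ContinuousLinearMap.snd ℝ ℝ ℝ)
  have hsqrt : (Real.sqrt (1 - ρ ^ 2) : ℂ) ^ 2 = 1 - (ρ : ℂ) ^ 2 := by
    exact_mod_cast Real.sq_sqrt (sub_nonneg.2 ((sq_le_one_iff_abs_le_one ρ).2 hρ))
  change charFunDual (((gaussianReal 0 1).prod (gaussianReal 0 1)).map T) L = _
  have hx : L (T (1, 0)) = L (1, 0) + ρ * L (0, 1) := by
    simpa [T] using map_prodMk_eq_smul_add_smul L 1 ρ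
  have hy : L (T (0, 1)) = Real.sqrt (1 - ρ ^ 2) * L (0, 1) := by
    simpa [T] using map_prodMk_eq_smul_add_smul L 0 (Real.sqrt (1 - ρ ^ 2))
  rw [charFunDual_map, charFunDual_prod, charFunDual_gaussianReal, charFunDual_gaussianReal,
    ← Complex.exp_add]
  simp only [ContinuousLinearMap.comp_apply, ContinuousLinearMap.inl_apply,
    ContinuousLinearMap.inr_apply, hx, hy]
  congr 1
  push_cast
  linear_combination -(L (0, 1) : ℂ) ^ 2 / 2 * hsqrt

variable {E : Type*} [NormedAddCommGroup E] [InnerProductSpace ℝ E] [FiniteDimensional ℝ E]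
  [MeasurableSpace E] [BorelSpace E]

lemma measurePreserving_inner_stdGaussian {u v : E} (hu : ‖u‖ = 1) (hv : ‖v‖ = 1) :
    MeasurePreserving (fun x => (inner ℝ u x, inner ℝ v x)) (stdGaussian E)
      (correlatedGaussian (inner ℝ u v)) := by
  refine ⟨by fun_prop, ?_⟩
  let T : E →L[ℝ] ℝ × ℝ := (innerSL ℝ u).prod (innerSL ℝ v)
  change (stdGaussian E).map T = _
  refine Measure.ext_of_charFunDual (funext fun L => ?_)
  have hLT : L.comp T = innerSL ℝ (L (1, 0) • u + L (0, 1) • v) := by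
    ext x
    simp [T, map_prodMk_eq_smul_add_smul L (inner ℝ u x), mul_comm]
  have hρ : |inner ℝ u v| ≤ 1 := by simpa [hu, hv] using abs_real_inner_le_norm u v
  have hnorm : ‖L (1, 0) • u + L (0, 1) • v‖ ^ 2 =
      L (1, 0) ^ 2 + 2 * inner ℝ u v * L (1, 0) * L (0, 1) + L (0, 1) ^ 2 := by
    rw [norm_add_sq_real, norm_smul, norm_smul, hu, hv, real_inner_smul_left, real_inner_smul_right]
    simp only [Real.norm_eq_abs, mul_one, sq_abs]
    ring
  rw [charFunDual_map, hLT, charFunDual_stdGaussian, innerSL_apply_norm,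
    charFunDual_correlatedGaussian hρ, ← hnorm]
  simp [neg_div]

end CorrelatedGaussian

section Kernel

variable {k : ℕ} {f g : (Fin k → ℝ) → ℝ}

lemma hfg_eq_integral_pi_correlatedGaussian {ρ : ℝ}
    (hint : Integrable (fun z : Fin k → ℝ × ℝ => f (fun l => (z l).1) * g (fun l => (z l).2))
      (Measure.pi fun _ => correlatedGaussian ρ)) :
    hfg f g ρ = ∫ z : Fin k → ℝ × ℝ, f (fun l => (z l).1) * g (fun l => (z l).2)
      ∂(Measure.pi fun _ => correlatedGaussian ρ) := by
  have hunzip := measurePreserving_arrowProdEquivProdArrow ℝ ℝ (Fin k)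
    (fun _ => gaussianReal 0 1) (fun _ => gaussianReal 0 1)
  have hcorr := (measurePreserving_pi (fun _ : Fin k => (gaussianReal 0 1).prod (gaussianReal 0 1))
    _ fun _ => measurePreserving_correlatedGaussian ρ).comp hunzip.symm
  rw [← hcorr.map_eq, integral_map hcorr.measurable.aemeasurable
    (by rw [hcorr.map_eq]; exact hint.aestronglyMeasurable)]
  exact (integral_prod _ (hcorr.integrable_comp_of_integrable hint)).symm

variable {E : Type*} [NormedAddCommGroup E] [InnerProductSpace ℝ E] [FiniteDimensional ℝ E]

lemma hfg_inner_eq_integral_pi_stdGaussian [MeasurableSpace E] [BorelSpace E] {u v : E}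
    (hu : ‖u‖ = 1) (hv : ‖v‖ = 1)
    (hint : Integrable (fun z : Fin k → ℝ × ℝ => f (fun l => (z l).1) * g (fun l => (z l).2))
      (Measure.pi fun _ => correlatedGaussian (inner ℝ u v))) :
    hfg f g (inner ℝ u v) = ∫ ω : Fin k → E, f (fun l => inner ℝ u (ω l)) *
      g (fun l => inner ℝ v (ω l)) ∂(Measure.pi fun _ => stdGaussian E) := by
  have hpair := measurePreserving_pi (fun _ : Fin k => stdGaussian E) _
    fun _ => measurePreserving_inner_stdGaussian hu hv
  rw [hfg_eq_integral_pi_correlatedGaussian hint, ← hpair.map_eq,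
    integral_map hpair.measurable.aemeasurable
      (by rw [hpair.map_eq]; exact hint.aestronglyMeasurable)]

lemma abs_bilinear_hfg_inner_le {m n : ℕ} {Mf Mg : ℝ} (hf : Measurable f) (hg : Measurable g)
    (hfb : ∀ x, |f x| ≤ Mf) (hgb : ∀ x, |g x| ≤ Mg)
    (A : Matrix (Fin m) (Fin n) ℝ) {u : Fin m → E} {v : Fin n → E}
    (hu : ∀ i, ‖u i‖ = 1) (hv : ∀ j, ‖v j‖ = 1) :
    |∑ i, ∑ j, A i j * hfg f g (inner ℝ (u i) (v j))| ≤ Mf * Mg * normInftyOne A := by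
  borelize E
  have hint (i j) :
      Integrable (fun z : Fin k → ℝ × ℝ => f (fun l => (z l).1) * g (fun l => (z l).2))
        (Measure.pi fun _ => correlatedGaussian (inner ℝ (u i) (v j))) :=
    integrable_mul_of_abs_le (hf.comp (by fun_prop)).aestronglyMeasurable
      (hg.comp (by fun_prop)).aestronglyMeasurable (fun _ => hfb _) (fun _ => hgb _)
  simp_rw [fun i j => hfg_inner_eq_integral_pi_stdGaussian (hu i) (hv j) (hint i j)]
  exact abs_bilinear_integral_le_mul_normInftyOne A
    ((abs_nonneg _).trans (hfb 0)) ((abs_nonneg _).trans (hgb 0))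
    (fun i => (hf.comp (by fun_prop)).aestronglyMeasurable)
    (fun j => (hg.comp (by fun_prop)).aestronglyMeasurable) (fun _ _ => hfb _) (fun _ _ => hgb _)

end Kernel

theorem generalized_krivine_bound_general {E : Type*} [NormedAddCommGroup E]
    [InnerProductSpace ℝ E] (k m n : ℕ) (f g : (Fin k → ℝ) → ℝ) (Mf Mg : ℝ)
    (hfmeas : Measurable f) (hgmeas : Measurable g)
    (hfb : ∀ x, |f x| ≤ Mf) (hgb : ∀ x, |g x| ≤ Mg)
    (A : Matrix (Fin m) (Fin n) ℝ) (u : Fin m → E) (v : Fin n → E)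
    (hu : ∀ i, ‖u i‖ = 1) (hv : ∀ j, ‖v j‖ = 1) :
    |∑ i, ∑ j, A i j * hfg f g (inner ℝ (u i) (v j))| ≤ Mf * Mg * normInftyOne A := by
  let S := Submodule.span ℝ (Set.range u ∪ Set.range v)
  have : FiniteDimensional ℝ S :=
    FiniteDimensional.span_of_finite ℝ ((Set.finite_range u).union (Set.finite_range v))
  let u' (i : Fin m) : S := ⟨u i, Submodule.subset_span (.inl ⟨i, rfl⟩)⟩
  let v' (j : Fin n) : S := ⟨v j, Submodule.subset_span (.inr ⟨j, rfl⟩)⟩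
  exact abs_bilinear_hfg_inner_le (u := u') (v := v') hfmeas hgmeas hfb hgb A hu hv

/-- Generalised Krivine estimate for bounded kernels. -/
theorem generalized_krivine_bound
    (k m n d : ℕ) (f g : (Fin k → ℝ) → ℝ) (Mf Mg : ℝ)
    (hfmeas : Measurable f) (hgmeas : Measurable g)
    (hfb : ∀ x, |f x| ≤ Mf) (hgb : ∀ x, |g x| ≤ Mg)
    (A : Matrix (Fin m) (Fin n) ℝ)
    (u : Fin m → EuclideanSpace ℝ (Fin d)) (v : Fin n → EuclideanSpace ℝ (Fin d))
    (hu : ∀ i, ‖u i‖ = 1) (hv : ∀ j, ‖v j‖ = 1) :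
    |∑ i, ∑ j, A i j * hfg f g (inner ℝ (u i) (v j) : ℝ)| ≤
      Mf * Mg * normInftyOne A :=
  generalized_krivine_bound_general k m n f g Mf Mg hfmeas hgmeas hfb hgb A u v hu hv
end

section
/- Representation theorem for odd continuous CCP functions: let k ≥ 1 and let ψ : [-1,1] → ℝ be continuous and odd. Then ψ is completely correlation preserving if and only if there exists a measurable odd function f : ℝ^k → ℝ with ∫_{ℝ^k} f(x)² dγ_k(x) = 1 such that ψ(ρ) = h_{f,f}(ρ) for every ρ ∈ [-1,1]. -/
/-!
A correlation matrix `Σ` is the Gram matrix of unit vectors `u i`. If `G m` are i.i.d. with law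
`γ_k`, the vectors `X i = ∑ m, u i m • G m` also have law `γ_k` and `X i`, `X j` are
`Σ i j`-correlated, so `h_{f,f}(Σ i j) = E f(X i) f(X j)` is a Gram matrix in `L²`.

Conversely, restrict a CCP function `ψ` to the normalized inner products of the sign vectors
`z ∈ {±1}^d`. The resulting matrix is positive semidefinite and invariant under the group `{±1}^d`,
so `z ↦ ψ((z₁ + ⋯ + z_d) / d)` has nonnegative Walsh–Fourier coefficients. Up to a factor `2⁻ᵈ`,
their sums by degree are the coefficients of the polynomial `t ↦ E ψ((z₁ + ⋯ + z_d) / d)` for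
independent signs of mean `t`, which is the `d`-th Bernstein polynomial of `ψ`. Letting `d → ∞`
gives Schoenberg's expansion `ψ(t) = ∑ aₙ tⁿ` with `aₙ ≥ 0`, and oddness kills the even
coefficients. The Hermite polynomials diagonalize noise stability with eigenvalues `ρⁿ`, so
`f = ∑ √aₙ Heₙ / √n!` represents `ψ` on `ℝ`, and composing it with a coordinate represents `ψ` on
`ℝ^k`.
-/

open scoped BigOperators
open MeasureTheory ProbabilityTheory

/-- A real square matrix is a correlation matrix if it is positive semidefinite
(symmetric with nonnegative quadratic form) and has unit diagonal. -/
def IsCorrMat {n : ℕ} (S : Matrix (Fin n) (Fin n) ℝ) : Prop :=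
  S.PosSemidef ∧ ∀ i, S i i = 1

/-- A function is completely correlation preserving if its entrywise application maps
correlation matrices of every size to correlation matrices. (Entries of a correlation
matrix always lie in `[-1,1]`, so only the restriction of `h` to `[-1,1]` matters.) -/
def IsCCP (h : ℝ → ℝ) : Prop :=
  ∀ (n : ℕ) (S : Matrix (Fin n) (Fin n) ℝ), IsCorrMat S →
    IsCorrMat (Matrix.of fun i j => h (S i j))

lemma integral_eq_zero_of_odd {G F : Type*} [AddGroup G] [MeasurableSpace G] [MeasurableNeg G]
    [NormedAddCommGroup F] [NormedSpace ℝ F] (ν : Measure G) [ν.IsNegInvariant] {f : G → F}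
    (hf : f.Odd) : ∫ x, f x ∂ν = 0 := by
  have : IsAddTorsionFree F := .of_isTorsionFree ℝ F
  rw [← self_eq_neg, ← integral_neg, ← integral_neg_eq_self f ν]
  simp only [hf _]

lemma memLp_two_of_integral_sq_ne_zero {α : Type*} {_ : MeasurableSpace α} {ν : Measure α}
    {f : α → ℝ} (hf : AEStronglyMeasurable f ν) (h : ∫ x, f x ^ 2 ∂ν ≠ 0) : MemLp f 2 ν :=
  (memLp_two_iff_integrable_sq hf).2 (.of_integral_ne_zero h)

lemma dotProduct_mem_Icc {ι : Type*} [Fintype ι] {u v : ι → ℝ} (hu : u ⬝ᵥ u = 1)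
    (hv : v ⬝ᵥ v = 1) : u ⬝ᵥ v ∈ Set.Icc (-1 : ℝ) 1 := by
  have hnonneg (w : ι → ℝ) : 0 ≤ w ⬝ᵥ w := dotProduct_self_star_nonneg w
  have hadd := hnonneg (u + v)
  have hsub := hnonneg (u - v)
  simp only [add_dotProduct, dotProduct_add, sub_dotProduct, dotProduct_sub,
    dotProduct_comm v u] at hadd hsub
  constructor <;> linarith

open scoped MatrixOrder in
lemma exists_dotProduct_eq_of_posSemidef {n : Type*} [Fintype n] {S : Matrix n n ℝ}
    (hS : S.PosSemidef) : ∃ u : n → n → ℝ, ∀ i j, u i ⬝ᵥ u j = S i j := by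
  classical
  obtain ⟨B, hB⟩ := CStarAlgebra.nonneg_iff_eq_star_mul_self.mp hS.nonneg
  exact ⟨B.col, fun i j => by simp [hB, Matrix.mul_apply, dotProduct, Matrix.star_apply]⟩

lemma sum_covarianceBilinDual_smul_add_smul {ι E : Type*} [Fintype ι] [NormedAddCommGroup E]
    [NormedSpace ℝ E] [MeasurableSpace E] [BorelSpace E] (μ : Measure E) (u v : ι → ℝ)
    (L₁ L₂ : StrongDual ℝ E) :
    ∑ m, covarianceBilinDual μ (u m • L₁ + v m • L₂) (u m • L₁ + v m • L₂) =
      (u ⬝ᵥ u) * covarianceBilinDual μ L₁ L₁ + 2 * (u ⬝ᵥ v) * covarianceBilinDual μ L₁ L₂ +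
        (v ⬝ᵥ v) * covarianceBilinDual μ L₂ L₂ := by
  simp only [map_add, map_smul, add_apply, smul_apply, smul_eq_mul,
    covarianceBilinDual_comm L₂ L₁, dotProduct, Finset.mul_sum, Finset.sum_mul,
    ← Finset.sum_add_distrib]
  exact Finset.sum_congr rfl fun m _ => by ring

section CenteredGaussian

variable {E : Type*} [NormedAddCommGroup E] [NormedSpace ℝ E]

/-- The map `(x, y) ↦ ρ x + √(1 - ρ²) y`, which turns two independent centered Gaussian vectors with
the same law into a third one, `ρ`-correlated with the first. -/
noncomputable def noiseMix (ρ : ℝ) : E × E →L[ℝ] E :=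
  ρ • ContinuousLinearMap.fst ℝ E E + √(1 - ρ ^ 2) • ContinuousLinearMap.snd ℝ E E

@[simp]
lemma noiseMix_apply (ρ : ℝ) (z : E × E) : noiseMix ρ z = ρ • z.1 + √(1 - ρ ^ 2) • z.2 := rfl

lemma noiseMix_one : noiseMix 1 = ContinuousLinearMap.fst ℝ E E := by
  ext <;> simp

/-- The Gaussian noise stability `E f(X) g(Y)` of a pair of functions, where `X` has the centered
Gaussian law `μ` and `Y = ρ X + √(1 - ρ²) X'` with `X'` an independent copy of `X`. -/
noncomputable def noiseStability [MeasurableSpace E] (μ : Measure E)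
    (f g : E → ℝ) (ρ : ℝ) : ℝ :=
  ∫ z, f z.1 * g (noiseMix ρ z) ∂(μ.prod μ)

lemma noiseStability_one [MeasurableSpace E] [SecondCountableTopology E] (μ : Measure E)
    [IsProbabilityMeasure μ] (f g : E → ℝ) : noiseStability μ f g 1 = ∫ x, f x * g x ∂μ := by
  simp [noiseStability, noiseMix_one, integral_fun_fst (fun x => f x * g x)]

lemma noiseStability_comp_of_measurePreserving {F : Type*} [MeasurableSpace E] [BorelSpace E]
    [NormedAddCommGroup F] [NormedSpace ℝ F] [SecondCountableTopology F] [MeasurableSpace F]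
    [BorelSpace F] {μ : Measure E} {ν : Measure F} [SFinite μ] [SFinite ν] {L : E →L[ℝ] F}
    (hL : MeasurePreserving L μ ν) {f g : F → ℝ} (hf : Measurable f) (hg : Measurable g) (ρ : ℝ) :
    noiseStability μ (f ∘ L) (g ∘ L) ρ = noiseStability ν f g ρ := by
  unfold noiseStability
  rw [← (hL.prod hL).map_eq, integral_map (by fun_prop) (by fun_prop)]
  simp

/-- A linear combination of the coordinates of a vector of elements of `E`. -/
noncomputable def coordSum {ι : Type*} [Fintype ι] (u : ι → ℝ) : (ι → E) →L[ℝ] E :=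
  ∑ m, u m • ContinuousLinearMap.proj m

lemma coordSum_single {ι : Type*} [Fintype ι] [DecidableEq ι] (u : ι → ℝ) (m : ι) (x : E) :
    coordSum u (Pi.single m x) = u m • x := by
  simp [coordSum, Pi.single_apply, Finset.sum_ite_eq']

variable [SecondCountableTopology E] [CompleteSpace E] [MeasurableSpace E] [BorelSpace E]
  {μ : Measure E} [IsGaussian μ] [μ.IsNegInvariant] {ι : Type*} [Fintype ι] {u v : ι → ℝ}

lemma measurePreserving_noiseMix {ρ : ℝ} (hρ : ρ ∈ Set.Icc (-1 : ℝ) 1) :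
    MeasurePreserving (noiseMix ρ) (μ.prod μ) μ := by
  have hrot : MeasurePreserving (ContinuousLinearMap.rotation (Real.arccos ρ))
      (μ.prod μ) (μ.prod μ) :=
    ⟨by fun_prop, IsGaussian.map_rotation_eq_self (integral_eq_zero_of_odd μ fun _ => rfl) _⟩
  convert measurePreserving_fst.comp hrot using 1
  ext z
  simp [ContinuousLinearMap.rotation_apply, Real.cos_arccos hρ.1 hρ.2, Real.sin_arccos]

lemma charFunDual_of_isNegInvariant (L : StrongDual ℝ E) :
    charFunDual μ L = Complex.exp (-(covarianceBilinDual μ L L / 2 : ℝ)) := by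
  have hmean : ∫ x, x ∂μ = 0 := integral_eq_zero_of_odd μ fun _ => rfl
  rw [IsGaussian.charFunDual_eq']
  simp [hmean]

lemma map_coordSum_prod (hu : u ⬝ᵥ u = 1) (hv : v ⬝ᵥ v = 1) :
    (Measure.pi fun _ : ι => μ).map ((coordSum u).prod (coordSum v)) =
      (μ.prod μ).map ((ContinuousLinearMap.fst ℝ E E).prod (noiseMix (u ⬝ᵥ v))) := by
  classical
  refine Measure.ext_of_charFunDual (funext fun L => ?_)
  set L₁ := L ∘L ContinuousLinearMap.inl ℝ E E
  set L₂ := L ∘L ContinuousLinearMap.inr ℝ E E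
  have hL (x y : E) : L (x, y) = L₁ x + L₂ y := (L.comp_inl_add_comp_inr (x, y)).symm
  have hleft (m : ι) : (L ∘L (coordSum u).prod (coordSum v)) ∘L .single ℝ (fun _ => E) m =
      u m • L₁ + v m • L₂ := by
    ext x
    simp [coordSum_single, hL]
  have hinl : (L ∘L (ContinuousLinearMap.fst ℝ E E).prod (noiseMix (u ⬝ᵥ v))) ∘L .inl ℝ E E =
      L₁ + (u ⬝ᵥ v) • L₂ := by
    ext x
    simp [hL]
  have hinr : (L ∘L (ContinuousLinearMap.fst ℝ E E).prod (noiseMix (u ⬝ᵥ v))) ∘L .inr ℝ E E =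
      √(1 - (u ⬝ᵥ v) ^ 2) • L₂ := by
    ext x
    simp [hL]
  have hsq : √(1 - (u ⬝ᵥ v) ^ 2) * √(1 - (u ⬝ᵥ v) ^ 2) = 1 - (u ⬝ᵥ v) ^ 2 :=
    Real.mul_self_sqrt <| by
      nlinarith [(dotProduct_mem_Icc hu hv).1, (dotProduct_mem_Icc hu hv).2]
  rw [charFunDual_map, charFunDual_map, charFunDual_pi, charFunDual_prod, hinl, hinr]
  simp only [hleft, charFunDual_of_isNegInvariant, ← Complex.exp_add, ← Complex.exp_sum,
    Finset.sum_neg_distrib, ← Complex.ofReal_sum, ← Finset.sum_div,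
    sum_covarianceBilinDual_smul_add_smul, hu, hv]
  norm_cast
  congr 1
  simp only [map_add, map_smul, add_apply, smul_apply, smul_eq_mul, covarianceBilinDual_comm L₂ L₁]
  linear_combination covarianceBilinDual μ L₂ L₂ / 2 * hsq

lemma measurePreserving_coordSum (hu : u ⬝ᵥ u = 1) :
    MeasurePreserving (coordSum u) (Measure.pi fun _ : ι => μ) μ := by
  refine ⟨by fun_prop, ?_⟩
  have h := congrArg (Measure.map Prod.fst) (map_coordSum_prod (μ := μ) hu hu)
  rw [Measure.map_map (by fun_prop) (by fun_prop), Measure.map_map (by fun_prop) (by fun_prop)] at h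
  exact h.trans measurePreserving_fst.map_eq

lemma integral_comp_coordSum_mul_comp_coordSum {f g : E → ℝ} (hf : Measurable f)
    (hg : Measurable g) (hu : u ⬝ᵥ u = 1) (hv : v ⬝ᵥ v = 1) :
    ∫ ω, f (coordSum u ω) * g (coordSum v ω) ∂(Measure.pi fun _ : ι => μ) =
      noiseStability μ f g (u ⬝ᵥ v) := by
  have hfg : Measurable fun p : E × E => f p.1 * g p.2 := by fun_prop
  have h := congrArg (fun ν => ∫ p, f p.1 * g p.2 ∂ν) (map_coordSum_prod (μ := μ) hu hv)
  simp only [integral_map (ContinuousLinearMap.measurable _).aemeasurable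
    hfg.aestronglyMeasurable] at h
  exact h

theorem isCCP_of_eq_noiseStability {f : E → ℝ} {h : ℝ → ℝ} (hf : Measurable f)
    (hf_sq : ∫ x, f x ^ 2 ∂μ = 1)
    (h_eq : ∀ ρ ∈ Set.Icc (-1 : ℝ) 1, h ρ = noiseStability μ f f ρ) : IsCCP h := by
  intro n S ⟨hS, hdiag⟩
  obtain ⟨u, hu⟩ := exists_dotProduct_eq_of_posSemidef hS
  have hunit (i : Fin n) : u i ⬝ᵥ u i = 1 := by rw [hu, hdiag]
  have hmem : MemLp f 2 μ :=
    memLp_two_of_integral_sq_ne_zero hf.aestronglyMeasurable (by simp [hf_sq])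
  have hmem_comp (i : Fin n) : MemLp (f ∘ coordSum (u i)) 2 (Measure.pi fun _ : Fin n => μ) :=
    hmem.comp_measurePreserving (measurePreserving_coordSum (hunit i))
  have hgram : (Matrix.of fun i j => h (S i j)) =
      Matrix.gram ℝ fun i => (hmem_comp i).toLp := by
    ext i j
    rw [Matrix.of_apply, ← hu, h_eq _ (dotProduct_mem_Icc (hunit i) (hunit j)),
      ← integral_comp_coordSum_mul_comp_coordSum hf hf (hunit i) (hunit j), Matrix.gram_apply,
      L2.inner_def]
    refine integral_congr_ae ?_
    filter_upwards [(hmem_comp i).coeFn_toLp, (hmem_comp j).coeFn_toLp] with ω hi hj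
    simp [hi, hj, mul_comm]
  refine ⟨hgram ▸ Matrix.posSemidef_gram .., fun i => ?_⟩
  simp_rw [Matrix.of_apply, hdiag, h_eq 1 (by simp), noiseStability_one, ← sq, hf_sq]

end CenteredGaussian

section NoiseForm

variable {E : Type*} [NormedAddCommGroup E] [NormedSpace ℝ E] [SecondCountableTopology E]
  [CompleteSpace E] [MeasurableSpace E] [BorelSpace E] {μ : Measure E} [IsGaussian μ]
  [μ.IsNegInvariant] {ρ : ℝ}

lemma noiseStability_congr_ae {f f' g g' : E → ℝ} (hf : f =ᵐ[μ] f') (hg : g =ᵐ[μ] g')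
    (hρ : ρ ∈ Set.Icc (-1 : ℝ) 1) : noiseStability μ f g ρ = noiseStability μ f' g' ρ :=
  integral_congr_ae <|
    (measurePreserving_fst.quasiMeasurePreserving.ae_eq_comp hf).mul
      ((measurePreserving_noiseMix hρ).quasiMeasurePreserving.ae_eq_comp hg)

lemma noiseStability_eq_integral_integral {f g : E → ℝ} (hf : MemLp f 2 μ) (hg : MemLp g 2 μ)
    (hρ : ρ ∈ Set.Icc (-1 : ℝ) 1) :
    noiseStability μ f g ρ = ∫ x, ∫ y, f x * g (ρ • x + √(1 - ρ ^ 2) • y) ∂μ ∂μ :=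
  integral_prod _ <| (hf.comp_measurePreserving measurePreserving_fst).integrable_mul
    (hg.comp_measurePreserving (measurePreserving_noiseMix hρ))

/-- Noise stability as a bounded bilinear form on `L²(μ)`. -/
noncomputable def noiseForm (μ : Measure E) [IsGaussian μ] [μ.IsNegInvariant]
    (hρ : ρ ∈ Set.Icc (-1 : ℝ) 1) : Lp ℝ 2 μ →L[ℝ] Lp ℝ 2 μ →L[ℝ] ℝ :=
  (innerSL ℝ).bilinearComp
    (Lp.compMeasurePreservingₗᵢ ℝ Prod.fst measurePreserving_fst).toContinuousLinearMap
    (Lp.compMeasurePreservingₗᵢ ℝ (noiseMix ρ)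
      (measurePreserving_noiseMix hρ)).toContinuousLinearMap

lemma noiseForm_apply (hρ : ρ ∈ Set.Icc (-1 : ℝ) 1) (F G : Lp ℝ 2 μ) :
    noiseForm μ hρ F G = noiseStability μ F G ρ := by
  have h_inner : noiseForm μ hρ F G = inner ℝ (Lp.compMeasurePreserving _ measurePreserving_fst F)
      (Lp.compMeasurePreserving _ (measurePreserving_noiseMix hρ) G) := rfl
  rw [h_inner, L2.inner_def]
  refine integral_congr_ae ?_
  filter_upwards [Lp.coeFn_compMeasurePreserving F (measurePreserving_fst (μ := μ) (ν := μ)),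
    Lp.coeFn_compMeasurePreserving G (measurePreserving_noiseMix hρ)] with z hF hG
  rw [hF, hG]
  simp [mul_comm]

end NoiseForm

lemma hasSum_apply_self_of_pairwise_eq_zero {V ι : Type*} [NormedAddCommGroup V]
    [NormedSpace ℝ V] (B : V →L[ℝ] V →L[ℝ] ℝ) {x : ι → V} {F : V} (hx : HasSum x F)
    (hB : Pairwise fun i j => B (x i) (x j) = 0) : HasSum (fun i => B (x i) (x i)) (B F F) := by
  have hdiag (i : ι) : B (x i) F = B (x i) (x i) :=
    ((B (x i)).hasSum hx).unique (hasSum_single i fun j hj => hB hj.symm)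
  simpa only [hdiag, ContinuousLinearMap.flip_apply] using (B.flip F).hasSum hx

lemma exists_measurable_odd_ae_eq {G : Type*} [AddGroup G] [MeasurableSpace G] [MeasurableNeg G]
    {ν : Measure G} [ν.IsNegInvariant] {g : G → ℝ} (hg : AEMeasurable g ν)
    (hodd : (fun x => g (-x)) =ᵐ[ν] fun x => -g x) :
    ∃ f : G → ℝ, Measurable f ∧ f.Odd ∧ f =ᵐ[ν] g := by
  obtain ⟨f, hf, hgf⟩ := hg
  refine ⟨fun x => (f x - f (-x)) / 2, by fun_prop, fun x => by simp only [neg_neg]; ring, ?_⟩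
  have hgf_neg : (fun x => g (-x)) =ᵐ[ν] fun x => f (-x) :=
    (Measure.measurePreserving_neg ν).quasiMeasurePreserving.ae_eq_comp hgf
  filter_upwards [hgf, hgf_neg, hodd] with x h₁ h₂ h₃
  rw [← h₁, ← h₂, h₃]
  ring

section Stein

open scoped NNReal

lemma hasDerivAt_gaussianPDFReal (m : ℝ) (v : ℝ≥0) (x : ℝ) :
    HasDerivAt (gaussianPDFReal m v) (-((x - m) / v) * gaussianPDFReal m v x) x := by
  have hquad : HasDerivAt (fun x : ℝ => -(x - m) ^ 2 / (2 * v)) (-((x - m) / v)) x := by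
    refine ((((hasDerivAt_id x).sub_const m).pow 2).neg.div_const (2 * (v : ℝ))).congr_deriv ?_
    simp only [Nat.cast_ofNat, id_eq, Nat.add_one_sub_one, pow_one, mul_one]
    ring
  rw [gaussianPDFReal_def]
  exact (hquad.exp.const_mul _).congr_deriv (by ring)

lemma integrable_gaussianReal_iff {m : ℝ} {v : ℝ≥0} (hv : v ≠ 0) {f : ℝ → ℝ} :
    Integrable f (gaussianReal m v) ↔ Integrable fun x => gaussianPDFReal m v x * f x := by
  rw [gaussianReal_of_var_ne_zero _ hv, integrable_withDensity_iff_integrable_smul'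
    (measurable_gaussianPDF m v) (ae_of_all _ fun _ => gaussianPDF_lt_top)]
  simp

lemma integral_sub_mul_gaussianReal {m : ℝ} {v : ℝ≥0} {f f' : ℝ → ℝ}
    (hderiv : ∀ x, HasDerivAt f (f' x) x) (hf : Integrable f (gaussianReal m v))
    (hxf : Integrable (fun x => (x - m) * f x) (gaussianReal m v))
    (hf' : Integrable f' (gaussianReal m v)) :
    ∫ x, (x - m) * f x ∂(gaussianReal m v) = v * ∫ x, f' x ∂(gaussianReal m v) := by
  rcases eq_or_ne v 0 with rfl | hv
  · simp
  have hv' : (v : ℝ) ≠ 0 := by exact_mod_cast hv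
  have hderiv_mul (x : ℝ) : HasDerivAt (fun x => gaussianPDFReal m v x * f x)
      (gaussianPDFReal m v x * (f' x - (x - m) * f x / v)) x :=
    ((hasDerivAt_gaussianPDFReal m v x).mul (hderiv x)).congr_deriv (by ring)
  have hzero : ∫ x, (f' x - (x - m) * f x / v) ∂(gaussianReal m v) = 0 := by
    rw [integral_gaussianReal_eq_integral_smul hv]
    exact integral_eq_zero_of_hasDerivAt_of_integrable hderiv_mul
      ((integrable_gaussianReal_iff hv).1 (hf'.sub (hxf.div_const _)))
      ((integrable_gaussianReal_iff hv).1 hf)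
  rw [integral_sub hf' (hxf.div_const _), integral_div, sub_eq_zero] at hzero
  rw [hzero, mul_div_cancel₀ _ hv']

end Stein

section Hermite

open Polynomial
open scoped Nat NNReal

lemma integrable_polynomial_eval_gaussianReal (m : ℝ) (v : ℝ≥0) (p : ℝ[X]) :
    Integrable (fun x => p.eval x) (gaussianReal m v) := by
  simp_rw [eval_eq_sum_range]
  exact integrable_finsetSum _ fun n _ =>
    (integrable_pow_of_mem_interior_integrableExpSet (X := id) (by simp) n).const_mul _

lemma memLp_two_polynomial_eval_gaussianReal (m : ℝ) (v : ℝ≥0) (p : ℝ[X]) :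
    MemLp (fun x => p.eval x) 2 (gaussianReal m v) :=
  (memLp_two_iff_integrable_sq (by fun_prop)).2 <| by
    have h := integrable_polynomial_eval_gaussianReal m v (p ^ 2)
    simpa only [eval_pow] using h

/-- The probabilists' Hermite polynomial of degree `n`, with real coefficients. -/
noncomputable def hermiteReal (n : ℕ) : ℝ[X] := (hermite n).map (Int.castRingHom ℝ)

lemma hermiteReal_zero : hermiteReal 0 = 1 := by simp [hermiteReal]

lemma hermiteReal_succ (n : ℕ) :
    hermiteReal (n + 1) = X * hermiteReal n - derivative (hermiteReal n) := by
  simp [hermiteReal, hermite_succ, derivative_map]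

lemma natDegree_hermiteReal (n : ℕ) : (hermiteReal n).natDegree = n := by
  rw [hermiteReal, (hermite_monic n).natDegree_map, natDegree_hermite]

lemma iterate_derivative_hermiteReal_self (n : ℕ) :
    derivative^[n] (hermiteReal n) = C (n ! : ℝ) := by
  ext j
  rw [coeff_iterate_derivative, coeff_C]
  rcases j with _ | j
  · simp [hermiteReal, Nat.descFactorial_self]
  · rw [coeff_eq_zero_of_natDegree_lt (by rw [natDegree_hermiteReal]; omega)]
    simp

lemma hermiteReal_comp_neg_X (n : ℕ) : (hermiteReal n).comp (-X) = (-1) ^ n * hermiteReal n := by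
  induction n with
  | zero => simp [hermiteReal_zero]
  | succ n ih =>
    have hderiv : (derivative (hermiteReal n)).comp (-X) =
        (-1) ^ (n + 1) * derivative (hermiteReal n) := by
      have h := congrArg derivative ih
      rcases neg_one_pow_eq_or ℝ[X] n with hn | hn <;>
        simpa [derivative_comp, pow_succ, hn, neg_eq_iff_eq_neg] using h
    rw [hermiteReal_succ, sub_comp, mul_comp, ih, hderiv, X_comp]
    ring

lemma integral_mul_polynomial_eval_gaussianReal (p : ℝ[X]) :
    ∫ x, x * p.eval x ∂(gaussianReal 0 1) = ∫ x, (derivative p).eval x ∂(gaussianReal 0 1) := by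
  have hxp := integrable_polynomial_eval_gaussianReal 0 1 (X * p)
  simpa using integral_sub_mul_gaussianReal (m := 0) (v := 1) (fun x => p.hasDerivAt x)
    (integrable_polynomial_eval_gaussianReal 0 1 p) (by simpa using hxp)
    (integrable_polynomial_eval_gaussianReal 0 1 _)

lemma integral_hermiteReal_mul (n : ℕ) (p : ℝ[X]) :
    ∫ x, (hermiteReal n).eval x * p.eval x ∂(gaussianReal 0 1) =
      ∫ x, (derivative^[n] p).eval x ∂(gaussianReal 0 1) := by
  induction n generalizing p with
  | zero => simp [hermiteReal_zero]
  | succ n ih =>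
    have hint := integrable_polynomial_eval_gaussianReal 0 1
    calc ∫ x, (hermiteReal (n + 1)).eval x * p.eval x ∂(gaussianReal 0 1)
        = ∫ x, x * (hermiteReal n * p).eval x ∂(gaussianReal 0 1) -
            ∫ x, (derivative (hermiteReal n) * p).eval x ∂(gaussianReal 0 1) := by
          have hX := hint (X * (hermiteReal n * p))
          simp only [eval_mul (p := X), eval_X] at hX
          rw [← integral_sub hX (hint _)]
          simp [hermiteReal_succ, sub_mul, mul_assoc]
      _ = ∫ x, (hermiteReal n * derivative p).eval x ∂(gaussianReal 0 1) := by
          rw [integral_mul_polynomial_eval_gaussianReal, ← integral_sub (hint _) (hint _)]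
          simp [derivative_mul]
      _ = ∫ x, (derivative^[n + 1] p).eval x ∂(gaussianReal 0 1) := by
          simpa using ih (derivative p)

lemma integral_hermiteReal_mul_hermiteReal (n m : ℕ) :
    ∫ x, (hermiteReal n).eval x * (hermiteReal m).eval x ∂(gaussianReal 0 1) =
      if n = m then (n ! : ℝ) else 0 := by
  wlog h : m ≤ n generalizing n m
  · have := this m n (le_of_not_ge h)
    simpa only [mul_comm, eq_comm, (lt_of_not_ge h).ne, (lt_of_not_ge h).ne', if_false] using this
  rw [integral_hermiteReal_mul]
  rcases h.eq_or_lt with rfl | hlt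
  · simp [iterate_derivative_hermiteReal_self]
  · rw [iterate_derivative_eq_zero (by rwa [natDegree_hermiteReal])]
    simp [hlt.ne']

lemma iterate_derivative_comp_C_mul_X_add_C (p : ℝ[X]) (a b : ℝ) (n : ℕ) :
    derivative^[n] (p.comp (C a * X + C b)) =
      C (a ^ n) * (derivative^[n] p).comp (C a * X + C b) := by
  induction n with
  | zero => simp
  | succ n ih =>
    rw [Function.iterate_succ_apply', ih, derivative_C_mul, derivative_comp, pow_succ, C_mul,
      Function.iterate_succ_apply', mul_assoc]
    simp

instance isNegInvariant_gaussianReal (v : ℝ≥0) : (gaussianReal 0 v).IsNegInvariant where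
  neg_eq_self := gaussianReal_map_neg.trans (by rw [neg_zero])

lemma noiseStability_hermiteReal (n : ℕ) (p : ℝ[X]) {ρ : ℝ} (hρ : ρ ∈ Set.Icc (-1 : ℝ) 1) :
    noiseStability (gaussianReal 0 1) (hermiteReal n).eval p.eval ρ =
      ρ ^ n * ∫ x, (hermiteReal n).eval x * p.eval x ∂(gaussianReal 0 1) := by
  have hmp := measurePreserving_noiseMix (μ := gaussianReal 0 1) hρ
  have hmem := memLp_two_polynomial_eval_gaussianReal 0 1
  have hint : Integrable (fun z : ℝ × ℝ => (hermiteReal n).eval z.1 * p.eval (noiseMix ρ z))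
      ((gaussianReal 0 1).prod (gaussianReal 0 1)) :=
    ((hmem _).comp_measurePreserving measurePreserving_fst).integrable_mul
      ((hmem p).comp_measurePreserving hmp)
  have hint' : ∫ z, (derivative^[n] p).eval (noiseMix ρ z)
      ∂((gaussianReal 0 1).prod (gaussianReal 0 1)) =
        ∫ x, (derivative^[n] p).eval x ∂(gaussianReal 0 1) := by
    conv_rhs => rw [← hmp.map_eq, integral_map (by fun_prop) (by fun_prop)]
  calc noiseStability (gaussianReal 0 1) (hermiteReal n).eval p.eval ρ
      = ∫ y, ∫ x, (hermiteReal n).eval x * (p.comp (C ρ * X + C (√(1 - ρ ^ 2) * y))).eval x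
          ∂(gaussianReal 0 1) ∂(gaussianReal 0 1) := by
        rw [noiseStability, integral_prod_symm _ hint]
        simp
    _ = ∫ y, ∫ x, ρ ^ n * (derivative^[n] p).eval (noiseMix ρ (x, y))
          ∂(gaussianReal 0 1) ∂(gaussianReal 0 1) := by
        simp_rw [integral_hermiteReal_mul, iterate_derivative_comp_C_mul_X_add_C]
        simp
    _ = ∫ z, ρ ^ n * (derivative^[n] p).eval (noiseMix ρ z)
          ∂((gaussianReal 0 1).prod (gaussianReal 0 1)) :=
        (integral_prod_symm _ ((hmp.integrable_comp_of_integrable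
          (integrable_polynomial_eval_gaussianReal 0 1 _)).const_mul _)).symm
    _ = ρ ^ n * ∫ x, (hermiteReal n).eval x * p.eval x ∂(gaussianReal 0 1) := by
        rw [integral_const_mul, hint', integral_hermiteReal_mul]

end Hermite

section HermiteLp

open scoped Nat

/-- The isometry `F ↦ F ∘ (x ↦ -x)` of `L²(ν)`, whose `-1`-eigenvectors are the odd functions. -/
noncomputable def reflectLp {G : Type*} [AddGroup G] [MeasurableSpace G] [MeasurableNeg G]
    (ν : Measure G) [ν.IsNegInvariant] : Lp ℝ 2 ν →ₗᵢ[ℝ] Lp ℝ 2 ν :=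
  Lp.compMeasurePreservingₗᵢ ℝ Neg.neg (Measure.measurePreserving_neg ν)

lemma coeFn_reflectLp {G : Type*} [AddGroup G] [MeasurableSpace G] [MeasurableNeg G]
    {ν : Measure G} [ν.IsNegInvariant] (F : Lp ℝ 2 ν) : reflectLp ν F =ᵐ[ν] fun x => F (-x) :=
  Lp.coeFn_compMeasurePreserving F (Measure.measurePreserving_neg ν)

lemma exists_measurable_odd_ae_eq_of_reflectLp_eq_neg {G : Type*} [AddGroup G] [MeasurableSpace G]
    [MeasurableNeg G] {ν : Measure G} [ν.IsNegInvariant] {F : Lp ℝ 2 ν} (hF : reflectLp ν F = -F) :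
    ∃ f : G → ℝ, Measurable f ∧ f.Odd ∧ f =ᵐ[ν] F :=
  exists_measurable_odd_ae_eq (Lp.aestronglyMeasurable F).aemeasurable <|
    (coeFn_reflectLp F).symm.trans <| hF ▸ Lp.coeFn_neg F

/-- The Hermite orthonormal system of `L²(γ)`. -/
noncomputable def hermiteLp (n : ℕ) : Lp ℝ 2 (gaussianReal 0 1) :=
  (√(n ! : ℝ))⁻¹ • (memLp_two_polynomial_eval_gaussianReal 0 1 (hermiteReal n)).toLp

lemma noiseForm_hermiteLp {ρ : ℝ} (hρ : ρ ∈ Set.Icc (-1 : ℝ) 1) (n m : ℕ) :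
    noiseForm (gaussianReal 0 1) hρ (hermiteLp n) (hermiteLp m) = if n = m then ρ ^ n else 0 := by
  have hcoe (n : ℕ) := (memLp_two_polynomial_eval_gaussianReal 0 1 (hermiteReal n)).coeFn_toLp
  simp only [hermiteLp, map_smul, smul_apply, smul_eq_mul, noiseForm_apply,
    noiseStability_congr_ae (hcoe n) (hcoe m) hρ, noiseStability_hermiteReal n _ hρ,
    integral_hermiteReal_mul_hermiteReal]
  rcases eq_or_ne n m with rfl | h
  · have hsq : √(n ! : ℝ) * √(n ! : ℝ) = n ! := Real.mul_self_sqrt (by positivity)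
    have hpos : √(n ! : ℝ) ≠ 0 := by positivity
    rw [if_pos rfl, if_pos rfl]
    field_simp
    linear_combination -ρ ^ n * hsq
  · simp [h]

lemma orthonormal_hermiteLp : Orthonormal ℝ hermiteLp := by
  refine orthonormal_iff_ite.2 fun n m => ?_
  have h := noiseForm_hermiteLp (by simp : (1 : ℝ) ∈ Set.Icc (-1) 1) n m
  rw [noiseForm_apply, noiseStability_one, one_pow] at h
  rw [← h, L2.inner_def]
  simp [mul_comm]

lemma reflectLp_hermiteLp (n : ℕ) :
    reflectLp (gaussianReal 0 1) (hermiteLp n) = (-1 : ℝ) ^ n • hermiteLp n := by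
  have hcomp (x : ℝ) : (hermiteReal n).eval (-x) = (-1 : ℝ) ^ n * (hermiteReal n).eval x := by
    simpa using congrArg (Polynomial.eval x) (hermiteReal_comp_neg_X n)
  have htoLp : reflectLp (gaussianReal 0 1)
      (memLp_two_polynomial_eval_gaussianReal 0 1 (hermiteReal n)).toLp =
        (-1 : ℝ) ^ n • (memLp_two_polynomial_eval_gaussianReal 0 1 (hermiteReal n)).toLp := by
    refine (Lp.toLp_compMeasurePreserving _ _).trans ?_
    rw [← MemLp.toLp_const_smul]
    exact MemLp.toLp_congr _ _ (ae_of_all _ hcomp)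
  rw [hermiteLp, map_smul, htoLp, smul_comm]

theorem exists_odd_hasSum_noiseStability {a : ℕ → ℝ} (ha_nonneg : ∀ n, 0 ≤ a n)
    (ha : Summable a) (ha_even : ∀ n, Even n → a n = 0) :
    ∃ f : ℝ → ℝ, Measurable f ∧ f.Odd ∧ ∀ ρ ∈ Set.Icc (-1 : ℝ) 1,
      HasSum (fun n => a n * ρ ^ n) (noiseStability (gaussianReal 0 1) f f ρ) := by
  obtain ⟨F, hF⟩ : Summable fun n => √(a n) • hermiteLp n := by
    simpa using (orthonormal_hermiteLp.orthogonalFamily.summable_iff_norm_sq_summable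
      fun n => √(a n)).2 (by simpa [Real.sq_sqrt (ha_nonneg _)] using ha)
  have hreflect (n : ℕ) : reflectLp (gaussianReal 0 1) (√(a n) • hermiteLp n) =
      -(√(a n) • hermiteLp n) := by
    rcases n.even_or_odd with hn | hn
    · simp [ha_even n hn]
    · simp [reflectLp_hermiteLp, hn.neg_one_pow]
  have hF_odd : reflectLp (gaussianReal 0 1) F = -F :=
    (hF.mapL (reflectLp _).toContinuousLinearMap).unique <| by
      simpa only [LinearIsometry.coe_toContinuousLinearMap, hreflect] using hF.neg
  obtain ⟨f, hf, hf_odd, hfF⟩ := exists_measurable_odd_ae_eq_of_reflectLp_eq_neg hF_odd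
  refine ⟨f, hf, hf_odd, fun ρ hρ => ?_⟩
  rw [noiseStability_congr_ae hfF hfF hρ, ← noiseForm_apply hρ]
  convert hasSum_apply_self_of_pairwise_eq_zero (noiseForm _ hρ) hF ?_ using 2 with n
  · simp [noiseForm_hermiteLp, ← mul_assoc, ha_nonneg]
  · intro n m hnm
    simp [noiseForm_hermiteLp, hnm]

end HermiteLp

section GaussK

instance isProbabilityMeasure_gaussK (k : ℕ) : IsProbabilityMeasure (gaussK k) := by
  unfold gaussK
  infer_instance

instance isNegInvariant_gaussK (k : ℕ) : (gaussK k).IsNegInvariant := by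
  unfold gaussK
  infer_instance

lemma measurePreserving_proj_gaussK {k : ℕ} (i : Fin k) :
    MeasurePreserving (ContinuousLinearMap.proj i : (Fin k → ℝ) →L[ℝ] ℝ) (gaussK k)
      (gaussianReal 0 1) :=
  measurePreserving_eval _ i

instance isGaussian_gaussK (k : ℕ) : IsGaussian (gaussK k) := by
  have hindep : iIndepFun (fun (i : Fin k) (x : Fin k → ℝ) => x i) (gaussK k) :=
    iIndepFun_pi (X := fun _ => id) fun _ => aemeasurable_id
  have hlaw (i : Fin k) : HasGaussianLaw (fun x : Fin k → ℝ => x i) (gaussK k) :=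
    ⟨(measurePreserving_proj_gaussK i).map_eq ▸ inferInstance⟩
  simpa using (hindep.hasGaussianLaw hlaw).isGaussian_map

lemma hfg_eq_noiseStability {k : ℕ} {f g : (Fin k → ℝ) → ℝ} (hf : MemLp f 2 (gaussK k))
    (hg : MemLp g 2 (gaussK k)) {ρ : ℝ} (hρ : ρ ∈ Set.Icc (-1 : ℝ) 1) :
    hfg f g ρ = noiseStability (gaussK k) f g ρ :=
  (noiseStability_eq_integral_integral hf hg hρ).symm

end GaussK

section PowerSeries

open Polynomial Filter Topology

lemma sum_range_coeff_le_eval_one {p : ℝ[X]} (hp : ∀ j, 0 ≤ p.coeff j) (N : ℕ) :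
    ∑ j ∈ Finset.range N, p.coeff j ≤ p.eval 1 := by
  rw [eval_eq_sum_range' (p.natDegree.lt_succ_self.trans_le (Nat.le_max_right N _))]
  simpa using Finset.sum_le_sum_of_subset_of_nonneg
    (Finset.range_mono (le_max_left N (p.natDegree + 1))) fun j _ _ => hp j

lemma tendsto_eval_of_tendsto_coeff {p : ℕ → ℝ[X]} {a : ℕ → ℝ} {c t : ℝ}
    (hbound : ∀ d j, |(p d).coeff j| ≤ c)
    (hlim : ∀ j, Tendsto (fun d => (p d).coeff j) atTop (𝓝 (a j))) (ht : |t| < 1) :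
    Tendsto (fun d => (p d).eval t) atTop (𝓝 (∑' j, a j * t ^ j)) := by
  have heval (d : ℕ) : (p d).eval t = ∑' j, (p d).coeff j * t ^ j := by
    rw [eval_eq_sum_range]
    refine (tsum_eq_sum fun j hj => ?_).symm
    rw [coeff_eq_zero_of_natDegree_lt (by simpa using hj), zero_mul]
  simp_rw [heval]
  refine tendsto_tsum_of_dominated_convergence
    ((summable_geometric_of_lt_one (abs_nonneg t) ht).mul_left c)
    (fun j => (hlim j).mul_const _) (.of_forall fun d j => ?_)
  rw [norm_mul, norm_pow, Real.norm_eq_abs, Real.norm_eq_abs]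
  exact mul_le_mul_of_nonneg_right (hbound d j) (by positivity)

lemma norm_mul_pow_le_of_mem_Icc {b t : ℝ} (hb : 0 ≤ b) (ht : t ∈ Set.Icc (-1 : ℝ) 1) (n : ℕ) :
    ‖b * t ^ n‖ ≤ b := by
  rw [norm_mul, norm_pow, Real.norm_of_nonneg hb]
  exact mul_le_of_le_one_right hb (pow_le_one₀ (norm_nonneg t) (abs_le.2 ht))

theorem exists_hasSum_of_tendsto_eval {p : ℕ → ℝ[X]} {ψ : ℝ → ℝ}
    (hp : ∀ d j, 0 ≤ (p d).coeff j) (hψ : ContinuousOn ψ (Set.Icc (-1) 1))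
    (hlim : ∀ t ∈ Set.Icc (-1 : ℝ) 1, Tendsto (fun d => (p d).eval t) atTop (𝓝 (ψ t))) :
    ∃ a : ℕ → ℝ, (∀ n, 0 ≤ a n) ∧ ∀ t ∈ Set.Icc (-1 : ℝ) 1,
      HasSum (fun n => a n * t ^ n) (ψ t) := by
  obtain ⟨c, hc⟩ := (hlim 1 (by simp)).bddAbove_range
  have hpartial (d N : ℕ) : ∑ j ∈ Finset.range N, (p d).coeff j ≤ c :=
    (sum_range_coeff_le_eval_one (hp d) N).trans (hc ⟨d, rfl⟩)
  have hcoeff (d j : ℕ) : (p d).coeff j ∈ Set.Icc 0 c :=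
    ⟨hp d j, (Finset.single_le_sum (fun i _ => hp d i) (Finset.self_mem_range_succ j)).trans
      (hpartial d (j + 1))⟩
  obtain ⟨a, ha, φ, hφ, hφa⟩ := (isCompact_univ_pi fun _ : ℕ => isCompact_Icc (a := 0) (b := c))
    |>.tendsto_subseq (x := fun d j => (p d).coeff j) fun d j _ => hcoeff d j
  have ha_nonneg (n : ℕ) : 0 ≤ a n := (ha n trivial).1
  rw [tendsto_pi_nhds] at hφa
  have ha_sum : Summable a := summable_of_sum_range_le ha_nonneg fun N =>
    le_of_tendsto (tendsto_finsetSum _ fun j _ => hφa j) (.of_forall fun d => hpartial (φ d) N)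
  have hbound (n : ℕ) (t : ℝ) (ht : t ∈ Set.Icc (-1 : ℝ) 1) : ‖a n * t ^ n‖ ≤ a n :=
    norm_mul_pow_le_of_mem_Icc (ha_nonneg n) ht n
  have h_interior : Set.EqOn (fun t => ∑' n, a n * t ^ n) ψ (Set.Ioo (-1) 1) := fun t ht =>
    tendsto_nhds_unique
      (tendsto_eval_of_tendsto_coeff
        (fun d j => (abs_of_nonneg (hp (φ d) j)).trans_le (hcoeff (φ d) j).2) hφa (abs_lt.2 ht))
      ((hlim t (Set.Ioo_subset_Icc_self ht)).comp hφ.tendsto_atTop)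
  have h_closed : Set.EqOn (fun t => ∑' n, a n * t ^ n) ψ (Set.Icc (-1) 1) :=
    h_interior.of_subset_closure (continuousOn_tsum (fun n => by fun_prop) ha_sum hbound) hψ
      Set.Ioo_subset_Icc_self (by rw [closure_Ioo (by norm_num)])
  exact ⟨a, ha_nonneg, fun t ht =>
    h_closed ht ▸ (Summable.of_norm_bounded ha_sum fun n => hbound n t ht).hasSum⟩

end PowerSeries

section Schoenberg

open Polynomial Filter Topology

lemma IsCCP.posSemidef_map {h : ℝ → ℝ} (hh : IsCCP h) {ι : Type*} [Finite ι] {S : Matrix ι ι ℝ}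
    (hS : S.PosSemidef) (hdiag : ∀ i, S i i = 1) : (S.map h).PosSemidef := by
  let e := Finite.equivFin ι
  have hS' : IsCorrMat (S.submatrix e.symm e.symm) := ⟨hS.submatrix _, fun _ => hdiag _⟩
  convert (hh _ _ hS').1.submatrix e using 1
  ext i j
  simp

lemma IsCCP.apply_one {h : ℝ → ℝ} (hh : IsCCP h) : h 1 = 1 :=
  (hh 1 1 ⟨.one, by simp⟩).2 0

lemma sum_mul_character_nonneg {G : Type*} [Group G] [Fintype G] {F : G → ℝ}
    (hF : (Matrix.of fun a b => F (a⁻¹ * b)).PosSemidef) (χ : G →* ℤˣ) :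
    0 ≤ ∑ g, F g * (χ g : ℤ) := by
  -- On the vector `χ`, every row contributes the same amount to the quadratic form.
  have h := hF.dotProduct_mulVec_nonneg fun g => ((χ g : ℤ) : ℝ)
  have hrow (a : G) : ((χ a : ℤ) : ℝ) * ∑ b, F (a⁻¹ * b) * (χ b : ℤ) = ∑ g, F g * (χ g : ℤ) := by
    rw [← Equiv.sum_comp (Equiv.mulLeft a), Finset.mul_sum]
    refine Finset.sum_congr rfl fun g _ => ?_
    have hsq : ((χ a : ℤ) : ℝ) * (χ a : ℤ) = 1 := by
      rcases Int.units_eq_one_or (χ a) with h | h <;> simp [h]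
    simp only [Equiv.coe_mulLeft, inv_mul_cancel_left, map_mul, Units.val_mul, Int.cast_mul]
    linear_combination F g * (χ g : ℤ) * hsq
  simp only [dotProduct, Matrix.mulVec, Matrix.of_apply, Pi.star_apply, star_trivial, hrow,
    Finset.sum_const, Finset.card_univ, nsmul_eq_mul] at h
  exact nonneg_of_mul_nonneg_right h (by exact_mod_cast Fintype.card_pos)

variable {ι : Type*} [Fintype ι]

/-- The average of a vector of signs. -/
noncomputable def signMean (z : ι → ℤˣ) : ℝ := (∑ i, ((z i : ℤ) : ℝ)) / Fintype.card ι

lemma signMean_one [Nonempty ι] : signMean (1 : ι → ℤˣ) = 1 := by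
  simp [signMean]

lemma signMean_eq_card [Nonempty ι] (z : ι → ℤˣ) :
    signMean z = 2 * (({i | z i = 1} : Finset ι).card / Fintype.card ι) - 1 := by
  have hz (i : ι) : ((z i : ℤ) : ℝ) = 2 * (if z i = 1 then 1 else 0) - 1 := by
    rcases Int.units_eq_one_or (z i) with h | h <;> norm_num [h]
  simp only [signMean, hz, Finset.sum_sub_distrib, ← Finset.mul_sum, Finset.sum_boole,
    Finset.sum_const, Finset.card_univ, nsmul_eq_mul, mul_one]
  field_simp

lemma prod_half_mul_one_add_sign (z : ι → ℤˣ) (t : ℝ) :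
    ∏ i, 1 / 2 * (1 + ((z i : ℤ) : ℝ) * t) =
      ((1 + t) / 2) ^ ({i | z i = 1} : Finset ι).card *
        ((1 - t) / 2) ^ (Fintype.card ι - ({i | z i = 1} : Finset ι).card) := by
  classical
  have hz (i : ι) : 1 / 2 * (1 + ((z i : ℤ) : ℝ) * t) =
      if z i = 1 then (1 + t) / 2 else (1 - t) / 2 := by
    rcases Int.units_eq_one_or (z i) with h | h <;> simp [h] <;> ring
  simp only [hz, Finset.prod_ite, Finset.prod_const, Finset.filter_not]
  simp [Finset.card_sdiff]

lemma posSemidef_signMean_inv_mul :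
    (Matrix.of fun z w : ι → ℤˣ => signMean (z⁻¹ * w)).PosSemidef := by
  let V : Matrix ι (ι → ℤˣ) ℝ := Matrix.of fun i z => ((z i : ℤ) : ℝ)
  have h := (Matrix.posSemidef_conjTranspose_mul_self V).smul
    (by positivity : 0 ≤ (Fintype.card ι : ℝ)⁻¹)
  convert h using 1
  ext z w
  simp [V, signMean, Matrix.mul_apply, div_eq_inv_mul]

variable [DecidableEq ι]

lemma IsCCP.sum_signMean_mul_character_nonneg [Nonempty ι] {ψ : ℝ → ℝ} (hψ : IsCCP ψ)
    (χ : (ι → ℤˣ) →* ℤˣ) : 0 ≤ ∑ z, ψ (signMean z) * (χ z : ℤ) :=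
  sum_mul_character_nonneg (F := fun z => ψ (signMean z))
    (hψ.posSemidef_map posSemidef_signMean_inv_mul fun z => by simp [signMean_one]) χ

/-- The expectation of `ψ ((z₁ + ⋯ + z_d) / d)` for independent random signs `z_i` of mean `X`. -/
noncomputable def signPolynomial (ι : Type*) [Fintype ι] [DecidableEq ι] (ψ : ℝ → ℝ) : ℝ[X] :=
  ∑ z : ι → ℤˣ, C (ψ (signMean z)) * ∏ i, C (1 / 2) * (1 + C ((z i : ℤ) : ℝ) * X)

lemma signPolynomial_eq_sum (ψ : ℝ → ℝ) :
    signPolynomial ι ψ = ∑ A : Finset ι, C ((1 / 2) ^ Fintype.card ι * ∑ z : ι → ℤˣ,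
      ψ (signMean z) * ((∏ i ∈ A, Pi.evalMonoidHom (fun _ => ℤˣ) i) z : ℤˣ)) * X ^ A.card := by
  simp only [signPolynomial, Finset.prod_mul_distrib, Finset.prod_one_add, Finset.powerset_univ,
    Finset.prod_const, Finset.card_univ, Finset.mul_sum, map_sum, Finset.sum_mul]
  rw [Finset.sum_comm]
  refine Finset.sum_congr rfl fun A _ => Finset.sum_congr rfl fun z _ => ?_
  simp only [MonoidHom.finsetProd_apply, Pi.evalMonoidHom_apply, Units.coe_prod, Int.cast_prod,
    C_mul, C_pow, map_prod]
  ring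

lemma IsCCP.coeff_signPolynomial_nonneg [Nonempty ι] {ψ : ℝ → ℝ} (hψ : IsCCP ψ) (j : ℕ) :
    0 ≤ (signPolynomial ι ψ).coeff j := by
  rw [signPolynomial_eq_sum, finsetSum_coeff]
  refine Finset.sum_nonneg fun A _ => ?_
  rw [coeff_C_mul_X_pow]
  have h := hψ.sum_signMean_mul_character_nonneg (∏ i ∈ A, Pi.evalMonoidHom (fun _ : ι => ℤˣ) i)
  split_ifs <;> positivity

lemma sum_comp_card_filter_eq_one {M : Type*} [AddCommMonoid M] (f : ℕ → M) :
    ∑ z : ι → ℤˣ, f ({i | z i = 1} : Finset ι).card =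
      ∑ m ∈ Finset.range (Fintype.card ι + 1), (Fintype.card ι).choose m • f m := by
  rw [← Finset.card_univ, ← Finset.sum_powerset_apply_card, Finset.powerset_univ]
  refine Finset.sum_bij' (fun z _ => ({i | z i = 1} : Finset ι))
    (fun A _ i => if i ∈ A then 1 else -1) (by simp) (by simp) (fun z _ => ?_) (by simp) (by simp)
  ext i
  rcases Int.units_eq_one_or (z i) with h | h <;> simp [h]

lemma eval_signPolynomial [Nonempty ι] (ψ : ℝ → ℝ) (t : ℝ) :
    (signPolynomial ι ψ).eval t = ∑ m ∈ Finset.range (Fintype.card ι + 1),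
      (Fintype.card ι).choose m • (ψ (2 * (m / Fintype.card ι) - 1) * (((1 + t) / 2) ^ m *
        ((1 - t) / 2) ^ (Fintype.card ι - m))) := by
  rw [← sum_comp_card_filter_eq_one fun m => ψ (2 * (m / Fintype.card ι) - 1) *
    (((1 + t) / 2) ^ m * ((1 - t) / 2) ^ (Fintype.card ι - m))]
  simp only [← prod_half_mul_one_add_sign, ← signMean_eq_card]
  simp [signPolynomial, eval_finsetSum, eval_prod]

lemma tendsto_eval_signPolynomial {ψ : ℝ → ℝ} (hψ : ContinuousOn ψ (Set.Icc (-1) 1)) {t : ℝ}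
    (ht : t ∈ Set.Icc (-1 : ℝ) 1) :
    Tendsto (fun d => (signPolynomial (Fin (d + 1)) ψ).eval t) atTop (𝓝 (ψ t)) := by
  let F : C(unitInterval, ℝ) := ⟨fun x => ψ (2 * (x : ℝ) - 1), hψ.comp_continuous (by fun_prop)
    fun x => ⟨by linarith [x.2.1], by linarith [x.2.2]⟩⟩
  let x : unitInterval := ⟨(1 + t) / 2, by linarith [ht.1], by linarith [ht.2]⟩
  have hFx : F x = ψ t := congrArg ψ (by simp only [x]; ring)
  have hbernstein (d : ℕ) : (signPolynomial (Fin (d + 1)) ψ).eval t =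
      bernsteinApproximation (d + 1) F x := by
    have hx : (1 : ℝ) - (1 + t) / 2 = (1 - t) / 2 := by ring
    simp only [eval_signPolynomial, bernsteinApproximation.apply, Fintype.card_fin,
      Finset.sum_range, bernstein_apply]
    refine Finset.sum_congr rfl fun m _ => ?_
    simp only [Nat.cast_add, Nat.cast_one, nsmul_eq_mul, hx, bernstein.z, ContinuousMap.coe_mk,
      smul_eq_mul, F, x]
    ring
  simp_rw [hbernstein, ← hFx]
  exact ((continuous_eval_const x).tendsto F).comp
    ((bernsteinApproximation_uniform F).comp (tendsto_add_atTop_nat 1))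

theorem IsCCP.exists_hasSum {ψ : ℝ → ℝ} (hψ : IsCCP ψ)
    (hcont : ContinuousOn ψ (Set.Icc (-1) 1)) :
    ∃ a : ℕ → ℝ, (∀ n, 0 ≤ a n) ∧ ∀ t ∈ Set.Icc (-1 : ℝ) 1, HasSum (fun n => a n * t ^ n) (ψ t) :=
  exists_hasSum_of_tendsto_eval (fun _ => hψ.coeff_signPolynomial_nonneg) hcont
    fun _ => tendsto_eval_signPolynomial hcont

end Schoenberg

lemma eq_zero_of_even_of_hasSum_neg {a : ℕ → ℝ} {s : ℝ} (ha_nonneg : ∀ n, 0 ≤ a n)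
    (hs : HasSum a s) (hs_neg : HasSum (fun n => a n * (-1) ^ n) (-s)) {n : ℕ} (hn : Even n) :
    a n = 0 := by
  have h_add : HasSum (fun n => a n + a n * (-1) ^ n) 0 := by simpa using hs.add hs_neg
  have h_nonneg (n : ℕ) : 0 ≤ a n + a n * (-1) ^ n := by
    rcases neg_one_pow_eq_or ℝ n with h | h <;> simp [h, ha_nonneg n]
  simpa [hn.neg_one_pow] using congrFun ((hasSum_zero_iff_of_nonneg h_nonneg).1 h_add) n

theorem IsCCP.exists_odd_noiseStability {ψ : ℝ → ℝ} (hψ : IsCCP ψ)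
    (hcont : ContinuousOn ψ (Set.Icc (-1) 1)) (hodd : ψ (-1) = -ψ 1) :
    ∃ f : ℝ → ℝ, Measurable f ∧ f.Odd ∧
      ∀ ρ ∈ Set.Icc (-1 : ℝ) 1, ψ ρ = noiseStability (gaussianReal 0 1) f f ρ := by
  obtain ⟨a, ha_nonneg, ha⟩ := hψ.exists_hasSum hcont
  have ha_one : HasSum a (ψ 1) := by simpa using ha 1 (by simp)
  have ha_even (n : ℕ) (hn : Even n) : a n = 0 :=
    eq_zero_of_even_of_hasSum_neg ha_nonneg ha_one (hodd ▸ ha (-1) (by simp)) hn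
  obtain ⟨f, hf, hf_odd, hfa⟩ :=
    exists_odd_hasSum_noiseStability ha_nonneg ha_one.summable ha_even
  exact ⟨f, hf, hf_odd, fun ρ hρ => (ha ρ hρ).unique (hfa ρ hρ)⟩

/-- Representation theorem for odd continuous CCP functions: a continuous odd
`ψ : [-1,1] → ℝ` is CCP iff `ψ = h_{f,f}` on `[-1,1]` for some odd measurable `f`
of unit `L²(γ_k)`-norm. -/
theorem odd_ccp_representation (k : ℕ) (hk : 1 ≤ k) (ψ : ℝ → ℝ)
    (hcont : ContinuousOn ψ (Set.Icc (-1) 1))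
    (hodd : ∀ ρ ∈ Set.Icc (-1 : ℝ) 1, ψ (-ρ) = - ψ ρ) :
    IsCCP ψ ↔ ∃ f : (Fin k → ℝ) → ℝ, Measurable f ∧ (∀ x, f (-x) = - f x) ∧
      (∫ x, (f x) ^ 2 ∂(gaussK k)) = 1 ∧
      ∀ ρ ∈ Set.Icc (-1 : ℝ) 1, ψ ρ = hfg f f ρ := by
  have h_hfg {f : (Fin k → ℝ) → ℝ} (hf : Measurable f) (hf_sq : ∫ x, f x ^ 2 ∂(gaussK k) = 1)
      {ρ : ℝ} (hρ : ρ ∈ Set.Icc (-1 : ℝ) 1) : hfg f f ρ = noiseStability (gaussK k) f f ρ := by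
    have hmem : MemLp f 2 (gaussK k) :=
      memLp_two_of_integral_sq_ne_zero hf.aestronglyMeasurable (by simp [hf_sq])
    exact hfg_eq_noiseStability hmem hmem hρ
  constructor
  · intro hψ
    obtain ⟨f, hf, hf_odd, hfψ⟩ := hψ.exists_odd_noiseStability hcont (hodd 1 (by simp))
    let π : (Fin k → ℝ) →L[ℝ] ℝ := .proj ⟨0, hk⟩
    have hπ (ρ : ℝ) (hρ : ρ ∈ Set.Icc (-1 : ℝ) 1) :
        ψ ρ = noiseStability (gaussK k) (f ∘ π) (f ∘ π) ρ := by
      rw [hfψ ρ hρ,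
        noiseStability_comp_of_measurePreserving (measurePreserving_proj_gaussK _) hf hf]
    have hsq : ∫ x, (f ∘ π) x ^ 2 ∂(gaussK k) = 1 := by
      rw [← hψ.apply_one, hπ 1 (by simp), noiseStability_one]
      simp_rw [sq]
    have hfπ : Measurable (f ∘ π) := hf.comp π.measurable
    exact ⟨f ∘ π, hfπ, fun _ => hf_odd _, hsq,
      fun ρ hρ => (hπ ρ hρ).trans (h_hfg hfπ hsq hρ).symm⟩
  · rintro ⟨f, hf, -, hf_sq, hψ⟩
    exact isCCP_of_eq_noiseStability hf hf_sq fun ρ hρ => (hψ ρ hρ).trans (h_hfg hf hf_sq hρ)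
end
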